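/- Assume 1 < Y < 8/5. As h → 0 with ε = ε(h) satisfying ε(h)·h^{−4/(8+Y)} → ∞ and ε(h)·h^{−1/(4−Y)} → 0, one has Var( X_h²·1_{|X_h| ≤ ε} ) = 2σ⁴h² + ((C₊+C₋)/(4−Y))·h·ε^{4−Y} + o(h·ε^{4−Y}). -/

import Mathlib

open MeasureTheory ProbabilityTheory Filter Asymptotics Set
open scoped Topology NNReal ENNReal Real

noncomputable section

/-- The Lévy density `s(x) = (C₊·1_{x>0} + C₋·1_{x<0})·q(x)·|x|^{−1−Y}`. -/
def levyDensity (Y Cp Cm : ℝ) (q : ℝ → ℝ) (x : ℝ) : ℝ :=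
  (if 0 < x then Cp else if x < 0 then Cm else 0) * q x * |x| ^ (-1 - Y)

/-- The Lévy measure `ν(dx) = s(x) dx`. -/
def levyMeasure (Y Cp Cm : ℝ) (q : ℝ → ℝ) : Measure ℝ :=
  volume.withDensity fun x => ENNReal.ofReal (levyDensity Y Cp Cm q x)

/-- The Lévy exponent `ψ_J(u) = ibu + ∫ (e^{iux} − 1 − iux·1_{|x|≤1}) ν(dx)`. -/
def psiJ (b Y Cp Cm : ℝ) (q : ℝ → ℝ) (u : ℝ) : ℂ :=
  Complex.I * b * u +
    ∫ x : ℝ,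
      (Complex.exp (Complex.I * u * x) - 1 - (if |x| ≤ 1 then Complex.I * u * x else 0))
      ∂(levyMeasure Y Cp Cm q)

/-- The scale parameter `ς = ((C₊+C₋)Γ(−Y)|cos(πY/2)|)^{1/Y}`. -/
def varsigma (Y Cp Cm : ℝ) : ℝ :=
  ((Cp + Cm) * Real.Gamma (-Y) * |Real.cos (π * Y / 2)|) ^ (1 / Y)

/-- The stable part of the Lévy exponent:
`ς^Y |u|^Y (1 − iβ·sgn(u)·tan(πY/2))` with `β = (C₊−C₋)/(C₊+C₋)`. -/
def stablePart (Y Cp Cm : ℝ) (u : ℝ) : ℂ :=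
  (varsigma Y Cp Cm ^ Y * |u| ^ Y : ℝ) *
    (1 - Complex.I * ((Cp - Cm) / (Cp + Cm)) * Real.sign u * Real.tan (π * Y / 2))

/-- Characteristic function of `X̃_h`, the time-`h` marginal of a Brownian motion with
variance `σ²` plus an independent strictly `Y`-stable process. -/
def tildeCF (σ Y Cp Cm : ℝ) (h u : ℝ) : ℂ :=
  Complex.exp (-(σ ^ 2 * u ^ 2 * h / 2) - h * stablePart Y Cp Cm u)

/-!
The law of `X_h / ε` has characteristic function `exp (-x u² + t κ(u))`, where `x = σ² h / (2 ε²)`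
and `t = h ε ^ (-Y)` tend to `0` and `κ` is the compensated exponent of the Lévy measure rescaled by
`ε`, which converges to the `Y`-stable one. For a Schwartz function `f`, Fourier inversion and
Taylor expansion of the exponential, to a high order in `x` and to first order in `t`, yield
`𝔼 f(X_h / ε)` as a polynomial in `x` with coefficients `f^(2k)(0) / k!`, plus `t` times the
integral of `f` against the Lévy measure when `f` vanishes to second order at `0`, plus a negligible
error. The lower bound on `ε` bounds `x` by a positive power of `h`, so that `x ^ n = o(t)` for
large `n`. Applied to `y ^ (2p)` cut off by smooth bumps close to `1_{|y| ≤ 1}` from either side,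
this gives the truncated moments `M₂ = 2x + O(t)` and `M₄ = 12x² + (C₊ + C₋) / (4 - Y) · t + o(t)`,
so that `Var = ε⁴ (M₄ - M₂²) = ε⁴ (8x² + (C₊ + C₋) / (4 - Y) · t + o(t))`.
-/

/-! ### Fourier representation of Schwartz functions -/

section FourierRepresentation

open SchwartzMap FourierTransform

lemma norm_exp_ofReal_mul_ofReal_mul_I (u x : ℝ) : ‖Complex.exp (u * x * Complex.I)‖ = 1 := by
  exact_mod_cast Complex.norm_exp_ofReal_mul_I (u * x)

lemma integrable_schwartz_mul_of_norm_le (F : 𝓢(ℝ, ℂ)) {g : ℝ → ℂ}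
    (hg : AEStronglyMeasurable g) {C : ℝ} {N : ℕ}
    (hle : ∀ v, ‖g v‖ ≤ C * (1 + (2 * π * v) ^ 2) ^ N) :
    Integrable fun v => F v * g v := by
  have hw : Function.HasTemperateGrowth fun v : ℝ => (1 + (2 * π * v) ^ 2) ^ N := by fun_prop
  have hF := ((smulLeftCLM ℂ (fun v : ℝ => (1 + (2 * π * v) ^ 2) ^ N) F).integrable
    (μ := volume)).norm.const_mul C
  refine hF.mono' (F.continuous.aestronglyMeasurable.mul hg) (.of_forall fun v => ?_)
  rw [smulLeftCLM_apply_apply hw, norm_mul, norm_smul, Real.norm_of_nonneg (by positivity)]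
  nlinarith [mul_le_mul_of_nonneg_right (hle v) (norm_nonneg (F v))]

lemma integral_fourier_mul_exp (f : 𝓢(ℝ, ℂ)) (x : ℝ) :
    ∫ v, 𝓕 f v * Complex.exp ((2 * π * v : ℝ) * x * Complex.I) = f x := by
  conv_rhs => rw [← FourierTransform.fourierInv_fourier_eq (F := 𝓢(ℝ, ℂ)) f, fourierInv_coe,
    Real.fourierInv_eq']
  refine integral_congr_ae (.of_forall fun v => ?_)
  simp only [smul_eq_mul, RCLike.inner_apply, conj_trivial]
  rw [mul_comm]
  push_cast
  ring_nf

lemma integral_fourier_mul_pow (f : 𝓢(ℝ, ℂ)) (j : ℕ) :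
    ∫ v, 𝓕 f v * ((2 * π * v : ℝ) * Complex.I) ^ j = iteratedDeriv j f 0 := by
  induction j generalizing f with
  | zero => simpa using integral_fourier_mul_exp f 0
  | succ j ih =>
    have hderiv : deriv f = derivCLM ℂ ℂ f := by ext; simp
    have hfourier : 𝓕 (derivCLM ℂ ℂ f) = fun v : ℝ => (2 * π * Complex.I * v) • 𝓕 f v := by
      rw [fourier_coe, ← hderiv, Real.fourier_deriv f.integrable f.differentiable
        (hderiv ▸ (derivCLM ℂ ℂ f).integrable)]
      rfl
    rw [iteratedDeriv_succ', hderiv, ← ih, hfourier]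
    refine integral_congr_ae (.of_forall fun v => ?_)
    simp only [smul_eq_mul]
    push_cast
    ring

lemma integral_schwartz_eq_integral_fourier_mul_charFun (f : 𝓢(ℝ, ℂ)) (μ : Measure ℝ)
    [IsFiniteMeasure μ] : ∫ x, f x ∂μ = ∫ v, 𝓕 f v * charFun μ (2 * π * v) := by
  have hswap : Integrable (Function.uncurry fun x v : ℝ =>
      𝓕 f v * Complex.exp ((2 * π * v : ℝ) * x * Complex.I)) (μ.prod volume) := by
    refine ((𝓕 f).integrable.comp_snd μ).norm.mono' ?_ (.of_forall fun p => ?_)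
    · refine Continuous.aestronglyMeasurable ?_
      have := (𝓕 f).continuous
      fun_prop
    · simp only [Function.uncurry, norm_mul, norm_exp_ofReal_mul_ofReal_mul_I, mul_one, le_refl]
  simp only [← integral_fourier_mul_exp f]
  rw [integral_integral_swap hswap]
  simp only [charFun_apply_real, integral_const_mul]

end FourierRepresentation

/-! ### Exponential estimates -/

lemma norm_exp_sub_sum_le_of_re_nonpos {z : ℂ} (hz : z.re ≤ 0) (n : ℕ) :
    ‖Complex.exp z - ∑ k ∈ Finset.range n, z ^ k / k.factorial‖ ≤ (n + 3) * ‖z‖ ^ n := by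
  rcases le_total ‖z‖ 1 with hz1 | hz1
  · calc _ ≤ ‖z‖ ^ n * Real.exp ‖z‖ := Complex.norm_exp_sub_sum_le_norm_mul_exp z n
      _ ≤ ‖z‖ ^ n * (n + 3) := by
        gcongr
        linarith [Real.exp_le_exp.2 hz1, Real.exp_one_lt_d9, n.cast_nonneg (α := ℝ)]
      _ = _ := mul_comm _ _
  · have hexp : ‖Complex.exp z‖ ≤ ‖z‖ ^ n := by
      rw [Complex.norm_exp]
      exact (Real.exp_le_one_iff.2 hz).trans (one_le_pow₀ hz1)
    have hsum : ‖∑ k ∈ Finset.range n, z ^ k / k.factorial‖ ≤ n * ‖z‖ ^ n := by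
      refine (norm_sum_le_of_le _ fun k hk => ?_).trans
        (by rw [Finset.sum_const, Finset.card_range, nsmul_eq_mul])
      rw [norm_div, norm_pow, Complex.norm_natCast]
      exact (div_le_self (by positivity) (mod_cast k.factorial_pos)).trans
        (pow_le_pow_right₀ hz1 (Finset.mem_range.1 hk).le)
    have hpow : 0 ≤ ‖z‖ ^ n := by positivity
    linarith [norm_sub_le (Complex.exp z) (∑ k ∈ Finset.range n, z ^ k / k.factorial)]

lemma norm_exp_add_sub_sum_sub_le {z w : ℂ} (hz : z.re ≤ 0) (hw : w.re ≤ 0) (n : ℕ) :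
    ‖Complex.exp (z + w) - ∑ k ∈ Finset.range n, z ^ k / k.factorial - w‖ ≤
      (n + 3) * ‖z‖ ^ n + 4 * (‖z‖ * ‖w‖) + 5 * ‖w‖ ^ 2 := by
  have hz_one := norm_exp_sub_sum_le_of_re_nonpos hz 1
  have hw_two := norm_exp_sub_sum_le_of_re_nonpos hw 2
  norm_num [Finset.sum_range_succ, ← sub_sub] at hz_one hw_two
  have hexp : ‖Complex.exp z‖ ≤ 1 := by rw [Complex.norm_exp]; exact Real.exp_le_one_iff.2 hz
  calc _ = ‖(Complex.exp z - ∑ k ∈ Finset.range n, z ^ k / k.factorial) + (Complex.exp z - 1) * w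
        + Complex.exp z * (Complex.exp w - 1 - w)‖ := by rw [Complex.exp_add]; ring_nf
    _ ≤ ‖Complex.exp z - ∑ k ∈ Finset.range n, z ^ k / k.factorial‖ + ‖Complex.exp z - 1‖ * ‖w‖
        + ‖Complex.exp z‖ * ‖Complex.exp w - 1 - w‖ := by
      exact norm_add₃_le.trans_eq (by simp only [norm_mul])
    _ ≤ (n + 3) * ‖z‖ ^ n + 4 * ‖z‖ * ‖w‖ + 1 * (5 * ‖w‖ ^ 2) := by
      gcongr
      exact norm_exp_sub_sum_le_of_re_nonpos hz n
    _ = _ := by ring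

lemma abs_add_sq_le (u : ℝ) : |u| + u ^ 2 ≤ 2 * (1 + u ^ 2) := by
  nlinarith [sq_nonneg (|u| - 1), sq_abs u]

lemma norm_exp_mul_I_sub_one_sub_le (u r : ℝ) :
    ‖Complex.exp (u * r * Complex.I) - 1 - u * r * Complex.I‖ ≤
      2 * (|u| + u ^ 2) * min |r| (r ^ 2) := by
  have hnorm : ‖(u * r * Complex.I : ℂ)‖ = |u| * |r| := by simp
  have hone : ‖Complex.exp (u * r * Complex.I) - 1‖ ≤ |u| * |r| := by
    simpa [mul_comm] using Real.norm_exp_I_mul_ofReal_sub_one_le (x := u * r)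
  have hlin : ‖Complex.exp (u * r * Complex.I) - 1 - u * r * Complex.I‖ ≤ 2 * (|u| * |r|) := by
    linarith [norm_sub_le (Complex.exp (u * r * Complex.I) - 1) (u * r * Complex.I)]
  have hquad : ‖Complex.exp (u * r * Complex.I) - 1 - u * r * Complex.I‖ ≤
      2 * (|u| * |r|) ^ 2 := by
    rcases le_total (|u| * |r|) 1 with h | h
    · have := Complex.norm_exp_sub_one_sub_id_le (hnorm.trans_le h)
      rw [hnorm] at this
      nlinarith [sq_nonneg (|u| * |r|)]
    · nlinarith
  have hu := abs_nonneg u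
  have hr := abs_nonneg r
  rw [← sq_abs u, ← sq_abs r]
  rcases min_choice |r| (|r| ^ 2) with h | h <;> rw [h]
  · nlinarith [mul_nonneg (sq_nonneg |u|) hr]
  · nlinarith [mul_nonneg hu (sq_nonneg |r|)]

/-! ### Small-time expansion of smooth functionals -/

section Expansion

open SchwartzMap FourierTransform

/-- The Lévy exponent, in the form compensated at every jump size, of a process without Gaussian
part, with drift `b` and Lévy measure `ν`. The integral has its intended meaning when `ν` integrates
`min |r| (r ^ 2)`. -/
def compensatedExponent (b : ℝ) (ν : Measure ℝ) (u : ℝ) : ℂ :=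
  b * u * Complex.I + ∫ r : ℝ, (Complex.exp (u * r * Complex.I) - 1 - u * r * Complex.I) ∂ν

/-- The value at `0` of the generator, applied to `f`, of the process with exponent
`compensatedExponent b ν`. -/
def compensatedGenerator (b : ℝ) (ν : Measure ℝ) (f : ℝ → ℂ) : ℂ :=
  b * deriv f 0 + ∫ r : ℝ, (f r - f 0 - r * deriv f 0) ∂ν

variable {ν : Measure ℝ}

lemma integrable_exp_mul_I_sub_one_sub (hν : Integrable (fun r : ℝ => min |r| (r ^ 2)) ν) (u : ℝ) :
    Integrable (fun r : ℝ => Complex.exp (u * r * Complex.I) - 1 - u * r * Complex.I) ν :=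
  (hν.const_mul (2 * (|u| + u ^ 2))).mono' (by fun_prop)
    (.of_forall fun r => norm_exp_mul_I_sub_one_sub_le u r)

lemma measurable_compensatedExponent (b : ℝ) (ν : Measure ℝ) [SFinite ν] :
    Measurable (compensatedExponent b ν) := by
  have hint : Measurable fun u : ℝ =>
      ∫ r : ℝ, (Complex.exp (u * r * Complex.I) - 1 - u * r * Complex.I) ∂ν := by
    refine (StronglyMeasurable.integral_prod_right (f := fun u r : ℝ =>
      Complex.exp (u * r * Complex.I) - 1 - u * r * Complex.I) ?_).measurable
    exact Continuous.stronglyMeasurable (by simp only [Function.uncurry_def]; fun_prop)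
  unfold compensatedExponent
  fun_prop

lemma norm_compensatedExponent_le (b : ℝ) (hν : Integrable (fun r : ℝ => min |r| (r ^ 2)) ν)
    (u : ℝ) :
    ‖compensatedExponent b ν u‖ ≤ 2 * (|b| + 2 * ∫ r, min |r| (r ^ 2) ∂ν) * (1 + u ^ 2) := by
  have hint : ‖∫ r : ℝ, (Complex.exp (u * r * Complex.I) - 1 - u * r * Complex.I) ∂ν‖ ≤
      2 * (|u| + u ^ 2) * ∫ r, min |r| (r ^ 2) ∂ν :=
    (norm_integral_le_of_norm_le (hν.const_mul _)
      (.of_forall fun r => norm_exp_mul_I_sub_one_sub_le u r)).trans_eq (integral_const_mul _ _)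
  calc _ ≤ ‖(b * u * Complex.I : ℂ)‖ + _ := norm_add_le _ _
    _ ≤ |b| * (|u| + u ^ 2) + 2 * (|u| + u ^ 2) * ∫ r, min |r| (r ^ 2) ∂ν := by
      gcongr
      simpa using mul_le_mul_of_nonneg_left (le_add_of_nonneg_right (sq_nonneg u)) (abs_nonneg b)
    _ = (|b| + 2 * ∫ r, min |r| (r ^ 2) ∂ν) * (|u| + u ^ 2) := by ring
    _ ≤ (|b| + 2 * ∫ r, min |r| (r ^ 2) ∂ν) * (2 * (1 + u ^ 2)) := by
      gcongr
      exact abs_add_sq_le u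
    _ = _ := by ring

lemma re_compensatedExponent_nonpos (b : ℝ) (hν : Integrable (fun r : ℝ => min |r| (r ^ 2)) ν)
    (u : ℝ) : (compensatedExponent b ν u).re ≤ 0 := by
  have hre : (compensatedExponent b ν u).re = ∫ r, (Real.cos (u * r) - 1) ∂ν := by
    have := integral_re (integrable_exp_mul_I_sub_one_sub hν u)
    simp only [RCLike.re_to_complex] at this
    simp [compensatedExponent, ← this, Complex.exp_re]
  rw [hre]
  exact integral_nonpos fun r => sub_nonpos.2 (Real.cos_le_one _)

lemma integrable_schwartz_mul_compensatedExponent (F : 𝓢(ℝ, ℂ)) (b : ℝ) [SFinite ν]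
    (hν : Integrable (fun r : ℝ => min |r| (r ^ 2)) ν) :
    Integrable fun v => F v * compensatedExponent b ν (2 * π * v) :=
  integrable_schwartz_mul_of_norm_le F (N := 1)
    (((measurable_compensatedExponent b ν).comp (measurable_const_mul _)).aestronglyMeasurable)
    fun v => (norm_compensatedExponent_le b hν (2 * π * v)).trans_eq (by rw [pow_one])

lemma integrable_schwartz_mul_pow (F : 𝓢(ℝ, ℂ)) (j : ℕ) :
    Integrable fun v => F v * ((2 * π * v : ℝ) * Complex.I) ^ j :=
  integrable_schwartz_mul_of_norm_le F (by fun_prop) (C := 1) (N := j) fun v => by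
    rw [norm_pow, one_mul, norm_mul, Complex.norm_I, mul_one, Complex.norm_real, Real.norm_eq_abs]
    gcongr
    nlinarith [sq_nonneg (|2 * π * v| - 1), sq_abs (2 * π * v)]

lemma integrable_schwartz_mul_exp (F : 𝓢(ℝ, ℂ)) (r : ℝ) :
    Integrable fun v => F v * Complex.exp ((2 * π * v : ℝ) * r * Complex.I) :=
  integrable_schwartz_mul_of_norm_le F (by fun_prop) (C := 1) (N := 0) fun v => by
    rw [norm_exp_ofReal_mul_ofReal_mul_I, pow_zero, one_mul]

lemma integrable_prod_schwartz_mul_exp_sub (F : 𝓢(ℝ, ℂ)) [SFinite ν]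
    (hν : Integrable (fun r : ℝ => min |r| (r ^ 2)) ν) :
    Integrable (fun p : ℝ × ℝ => F p.1 * (Complex.exp ((2 * π * p.1 : ℝ) * p.2 * Complex.I) - 1 -
      (2 * π * p.1 : ℝ) * p.2 * Complex.I)) (volume.prod ν) := by
  have hdom : Integrable fun v => F v * ((2 * (|2 * π * v| + (2 * π * v) ^ 2) : ℝ) : ℂ) :=
    integrable_schwartz_mul_of_norm_le F (by fun_prop) (C := 4) (N := 1) fun v => by
      rw [Complex.norm_real, Real.norm_of_nonneg (by positivity)]
      linarith [abs_add_sq_le (2 * π * v)]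
  refine (hdom.norm.mul_prod hν).mono' ?_ (.of_forall fun p => ?_)
  · have := F.continuous
    exact Continuous.aestronglyMeasurable (by fun_prop)
  · rw [norm_mul, norm_mul, Complex.norm_real, Real.norm_of_nonneg (by positivity),
      mul_assoc ‖F p.1‖]
    exact mul_le_mul_of_nonneg_left (norm_exp_mul_I_sub_one_sub_le (2 * π * p.1) p.2)
      (norm_nonneg _)

lemma integral_fourier_mul_integral_exp_sub (f : 𝓢(ℝ, ℂ)) [SFinite ν]
    (hν : Integrable (fun r : ℝ => min |r| (r ^ 2)) ν) :
    ∫ v, 𝓕 f v * ∫ r : ℝ, (Complex.exp ((2 * π * v : ℝ) * r * Complex.I) - 1 -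
      (2 * π * v : ℝ) * r * Complex.I) ∂ν = ∫ r : ℝ, (f r - f 0 - r * deriv f 0) ∂ν := by
  simp only [← integral_const_mul]
  rw [integral_integral_swap (integrable_prod_schwartz_mul_exp_sub (𝓕 f) hν)]
  refine integral_congr_ae (.of_forall fun r => ?_)
  have hexp := integrable_schwartz_mul_exp (𝓕 f) r
  have hpow := integrable_schwartz_mul_pow (𝓕 f)
  have hlin : Integrable fun v => 𝓕 f v * ((2 * π * v : ℝ) * Complex.I) ^ 0
      + r * (𝓕 f v * ((2 * π * v : ℝ) * Complex.I) ^ 1) := (hpow 0).add ((hpow 1).const_mul _)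
  calc _ = ∫ v, (𝓕 f v * Complex.exp ((2 * π * v : ℝ) * r * Complex.I)
        - (𝓕 f v * ((2 * π * v : ℝ) * Complex.I) ^ 0
          + r * (𝓕 f v * ((2 * π * v : ℝ) * Complex.I) ^ 1))) :=
      integral_congr_ae (.of_forall fun v => by ring)
    _ = f r - (f 0 + r * deriv f 0) := by
      rw [integral_sub hexp hlin,
        integral_add (hpow 0) ((hpow 1).const_mul _), integral_const_mul, integral_fourier_mul_exp,
        integral_fourier_mul_pow, integral_fourier_mul_pow, iteratedDeriv_zero, iteratedDeriv_one]
    _ = f r - f 0 - r * deriv f 0 := by ring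

lemma integral_fourier_mul_compensatedExponent (f : 𝓢(ℝ, ℂ)) (b : ℝ) [SFinite ν]
    (hν : Integrable (fun r : ℝ => min |r| (r ^ 2)) ν) :
    ∫ v, 𝓕 f v * compensatedExponent b ν (2 * π * v) = compensatedGenerator b ν f := by
  have hlin : Integrable fun v => 𝓕 f v * compensatedExponent b (0 : Measure ℝ) (2 * π * v) :=
    integrable_schwartz_mul_compensatedExponent (𝓕 f) b (integrable_zero_measure)
  have hjump := integrable_schwartz_mul_compensatedExponent (𝓕 f) 0 hν
  simp only [compensatedExponent, Complex.ofReal_zero, zero_mul, zero_add] at hlin hjump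
  simp only [integral_zero_measure, add_zero] at hlin
  simp only [compensatedExponent, compensatedGenerator, mul_add]
  rw [integral_add hlin hjump, integral_fourier_mul_integral_exp_sub f hν, ← iteratedDeriv_one,
    ← integral_fourier_mul_pow, ← integral_const_mul]
  congr 1
  exact integral_congr_ae (.of_forall fun v => by ring)

lemma integrable_schwartz_mul_charFun (F : 𝓢(ℝ, ℂ)) (μ : Measure ℝ) [IsProbabilityMeasure μ] :
    Integrable fun v => F v * charFun μ (2 * π * v) :=
  integrable_schwartz_mul_of_norm_le F
    (((measurable_charFun (μ := μ)).comp (measurable_const_mul _)).aestronglyMeasurable) (C := 1)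
    (N := 0) fun v => by simpa using norm_charFun_le_one (μ := μ) (2 * π * v)

lemma neg_mul_sq_pow_div_factorial (x u : ℝ) (k : ℕ) :
    (-(x * u ^ 2) : ℂ) ^ k / k.factorial = x ^ k / k.factorial * (u * Complex.I) ^ (2 * k) := by
  rw [pow_mul, mul_pow, Complex.I_sq, ← mul_one (u ^ 2 : ℂ), neg_mul_eq_mul_neg, mul_one,
    neg_eq_neg_one_mul, mul_pow]
  ring

lemma integral_fourier_mul_sum (f : 𝓢(ℝ, ℂ)) (n : ℕ) (x : ℝ) :
    ∫ v, 𝓕 f v * ∑ k ∈ Finset.range n, (-(x * (2 * π * v : ℝ) ^ 2) : ℂ) ^ k / k.factorial =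
      ∑ k ∈ Finset.range n, x ^ k / k.factorial * iteratedDeriv (2 * k) f 0 := by
  simp only [neg_mul_sq_pow_div_factorial, Finset.mul_sum, mul_left_comm (𝓕 f _)]
  rw [integral_finsetSum _ fun k _ => (integrable_schwartz_mul_pow (𝓕 f) _).const_mul _]
  simp only [integral_const_mul, integral_fourier_mul_pow]

lemma integrable_schwartz_mul_sum (F : 𝓢(ℝ, ℂ)) (n : ℕ) (x : ℝ) : Integrable fun v =>
    F v * ∑ k ∈ Finset.range n, (-(x * (2 * π * v : ℝ) ^ 2) : ℂ) ^ k / k.factorial := by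
  simp only [neg_mul_sq_pow_div_factorial, Finset.mul_sum, mul_left_comm (F _)]
  exact integrable_finsetSum _ fun k _ => (integrable_schwartz_mul_pow F _).const_mul _

lemma norm_exp_gaussian_add_jump_sub_le {x t D u : ℝ} (hx : 0 ≤ x) (ht : 0 ≤ t) (hD : 0 ≤ D)
    {κ : ℂ} (hκ_re : κ.re ≤ 0) (hκ : ‖κ‖ ≤ 2 * D * (1 + u ^ 2)) (n : ℕ) :
    ‖Complex.exp (-(x * u ^ 2) + t * κ)
        - ∑ k ∈ Finset.range n, (-(x * u ^ 2) : ℂ) ^ k / k.factorial - t * κ‖ ≤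
      (n + 23) * (1 + u ^ 2) ^ (n + 2) * (x ^ n + t * D * (x + t * D)) := by
  have hw : (1 : ℝ) ≤ 1 + u ^ 2 := le_add_of_nonneg_right (sq_nonneg u)
  have hz_re : (-(x * u ^ 2) : ℂ).re ≤ 0 := by
    norm_cast
    exact neg_nonpos.2 (by positivity)
  have htκ_re : (t * κ).re ≤ 0 := by
    rw [Complex.re_ofReal_mul]
    exact mul_nonpos_of_nonneg_of_nonpos ht hκ_re
  have hz : ‖(-(x * u ^ 2) : ℂ)‖ = x * u ^ 2 := by
    rw [norm_neg]
    norm_cast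
    exact abs_of_nonneg (by positivity)
  have htκ : ‖t * κ‖ ≤ 2 * (t * D) * (1 + u ^ 2) := by
    rw [norm_mul, Complex.norm_real, Real.norm_of_nonneg ht]
    linarith [mul_le_mul_of_nonneg_left hκ ht]
  calc _ ≤ (n + 3) * ‖(-(x * u ^ 2) : ℂ)‖ ^ n + 4 * (‖(-(x * u ^ 2) : ℂ)‖ * ‖t * κ‖)
        + 5 * ‖t * κ‖ ^ 2 := norm_exp_add_sub_sum_sub_le hz_re htκ_re n
    _ ≤ (n + 3) * (x * (1 + u ^ 2)) ^ n + 4 * (x * (1 + u ^ 2) * (2 * (t * D) * (1 + u ^ 2)))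
        + 5 * (2 * (t * D) * (1 + u ^ 2)) ^ 2 := by
      rw [hz]
      gcongr <;> linarith
    _ = (n + 3) * x ^ n * (1 + u ^ 2) ^ n
        + (8 * (x * (t * D)) + 20 * (t * D) ^ 2) * (1 + u ^ 2) ^ 2 := by rw [mul_pow]; ring
    _ ≤ (n + 3) * x ^ n * (1 + u ^ 2) ^ (n + 2)
        + (8 * (x * (t * D)) + 20 * (t * D) ^ 2) * (1 + u ^ 2) ^ (n + 2) := by
      gcongr <;> first | exact hw | omega
    _ = ((n + 3) * x ^ n + 8 * (x * (t * D)) + 20 * (t * D) ^ 2) * (1 + u ^ 2) ^ (n + 2) := by ring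
    _ ≤ ((n + 23) * (x ^ n + t * D * (x + t * D))) * (1 + u ^ 2) ^ (n + 2) := by
      gcongr
      have hn : (0 : ℝ) ≤ n := n.cast_nonneg
      have hxn : 0 ≤ x ^ n := by positivity
      have hxt : 0 ≤ x * (t * D) := by positivity
      nlinarith [mul_nonneg hn hxt, mul_nonneg hn (sq_nonneg (t * D))]
    _ = _ := by ring

/-- Fourier inversion turns this into the expansion of `charFun μ` to order `n` in `x` and to first
order in `t`, whose error grows polynomially and hence is integrable against `𝓕 f`. -/
theorem exists_norm_integral_sub_expansion_le (f : 𝓢(ℝ, ℂ)) (n : ℕ) :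
    ∃ C, ∀ (μ ν : Measure ℝ) [IsProbabilityMeasure μ] [SFinite ν] (x t b D : ℝ), 0 ≤ x → 0 ≤ t →
      Integrable (fun r : ℝ => min |r| (r ^ 2)) ν → |b| + 2 * ∫ r, min |r| (r ^ 2) ∂ν ≤ D →
      (∀ u, charFun μ u = Complex.exp (-(x * u ^ 2) + t * compensatedExponent b ν u)) →
      ‖∫ y, f y ∂μ - ∑ k ∈ Finset.range n, x ^ k / k.factorial * iteratedDeriv (2 * k) f 0
        - t * compensatedGenerator b ν f‖ ≤ C * (x ^ n + t * D * (x + t * D)) := by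
  have hweight : Integrable fun v =>
      𝓕 f v * (((n + 23) * (1 + (2 * π * v) ^ 2) ^ (n + 2) : ℝ) : ℂ) :=
    integrable_schwartz_mul_of_norm_le (𝓕 f) (by fun_prop) (C := n + 23) (N := n + 2) fun v => by
      rw [Complex.norm_real, Real.norm_of_nonneg (by positivity)]
  refine ⟨∫ v, ‖𝓕 f v * (((n + 23) * (1 + (2 * π * v) ^ 2) ^ (n + 2) : ℝ) : ℂ)‖,
    fun μ ν _ _ x t b D hx ht hν hD hμ => ?_⟩
  have hD₀ : 0 ≤ D := le_trans (by positivity) hD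
  have hsum := integrable_schwartz_mul_sum (𝓕 f) n x
  have hjump := (integrable_schwartz_mul_compensatedExponent (𝓕 f) b hν).const_mul (t : ℂ)
  have hchar := integrable_schwartz_mul_charFun (𝓕 f) μ
  have hsub : Integrable fun v => 𝓕 f v * charFun μ (2 * π * v) - 𝓕 f v *
      ∑ k ∈ Finset.range n, (-(x * (2 * π * v : ℝ) ^ 2) : ℂ) ^ k / k.factorial := hchar.sub hsum
  rw [integral_schwartz_eq_integral_fourier_mul_charFun, ← integral_fourier_mul_sum,
    ← integral_fourier_mul_compensatedExponent f b hν, ← integral_const_mul,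
    ← integral_sub hchar hsum, ← integral_sub hsub hjump, ← integral_mul_const]
  refine norm_integral_le_of_norm_le (hweight.norm.mul_const _) (.of_forall fun v => ?_)
  have hκ := (norm_compensatedExponent_le b hν (2 * π * v)).trans
    (by gcongr : _ ≤ 2 * D * (1 + (2 * π * v) ^ 2))
  rw [norm_mul, Complex.norm_real, Real.norm_of_nonneg (by positivity), mul_assoc ‖𝓕 f v‖]
  refine le_trans (le_of_eq ?_) (mul_le_mul_of_nonneg_left
    (norm_exp_gaussian_add_jump_sub_le hx ht hD₀ (re_compensatedExponent_nonpos b hν (2 * π * v))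
      hκ n) (norm_nonneg (𝓕 f v)))
  rw [← norm_mul, hμ]
  ring_nf

end Expansion

/-! ### Truncated powers and their smooth approximations -/

/-- The truncated power `x ↦ x ^ m · 1_{|x| ≤ R}`. -/
def truncatedPow (m : ℕ) (R : ℝ) : ℝ → ℝ :=
  indicator {x : ℝ | |x| ≤ R} fun x => x ^ m

lemma measurable_truncatedPow (m : ℕ) (R : ℝ) : Measurable (truncatedPow m R) :=
  Measurable.indicator (by fun_prop) (measurableSet_le (by fun_prop) (by fun_prop))

lemma truncatedPow_of_abs_le (m : ℕ) {R x : ℝ} (h : |x| ≤ R) : truncatedPow m R x = x ^ m :=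
  indicator_of_mem (s := {x : ℝ | |x| ≤ R}) h _

lemma truncatedPow_of_lt_abs (m : ℕ) {R x : ℝ} (h : R < |x|) : truncatedPow m R x = 0 :=
  indicator_of_notMem (s := {x : ℝ | |x| ≤ R}) (not_le.2 h) _

lemma abs_truncatedPow_le (m : ℕ) {R : ℝ} (hR : 0 ≤ R) (x : ℝ) : |truncatedPow m R x| ≤ R ^ m := by
  rcases le_or_gt |x| R with h | h
  · rw [truncatedPow_of_abs_le m h, abs_pow]
    gcongr
  · rw [truncatedPow_of_lt_abs m h, abs_zero]
    positivity

lemma integrable_truncatedPow (m : ℕ) {R : ℝ} (hR : 0 ≤ R) (μ : Measure ℝ) [IsFiniteMeasure μ] :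
    Integrable (truncatedPow m R) μ :=
  .of_bound (measurable_truncatedPow m R).aestronglyMeasurable (R ^ m)
    (.of_forall (abs_truncatedPow_le m hR))

lemma iteratedDeriv_ofReal_comp {f : ℝ → ℝ} {j : ℕ} {x : ℝ} (hf : ContDiffAt ℝ j f x) :
    iteratedDeriv j (fun y => (f y : ℂ)) x = iteratedDeriv j f x := by
  have h := Complex.ofRealCLM.iteratedFDeriv_comp_left hf le_rfl
  exact congrArg (fun A => A fun _ => 1) h

section BumpPow

open SchwartzMap

variable (β : ContDiffBump (0 : ℝ)) (m : ℕ)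

lemma contDiff_pow_mul_bump : ContDiff ℝ (⊤ : ℕ∞) fun x => x ^ m * β x :=
  (contDiff_id.pow m).mul β.contDiff

lemma hasCompactSupport_pow_mul_bump : HasCompactSupport fun x => x ^ m * β x :=
  β.hasCompactSupport.mul_left

lemma integrable_pow_mul_bump (μ : Measure ℝ) [IsFiniteMeasure μ] :
    Integrable (fun x => x ^ m * β x) μ :=
  (contDiff_pow_mul_bump β m).continuous.integrable_of_hasCompactSupport
    (hasCompactSupport_pow_mul_bump β m)

variable {m} in
lemma truncatedPow_le_pow_mul_bump (hm : Even m) (x : ℝ) :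
    truncatedPow m β.rIn x ≤ x ^ m * β x := by
  rcases le_or_gt |x| β.rIn with h | h
  · rw [truncatedPow_of_abs_le m h, β.one_of_mem_closedBall (by simpa using h), mul_one]
  · rw [truncatedPow_of_lt_abs m h]
    exact mul_nonneg (hm.pow_nonneg x) β.nonneg

variable {m} in
lemma pow_mul_bump_le_truncatedPow (hm : Even m) (x : ℝ) :
    x ^ m * β x ≤ truncatedPow m β.rOut x := by
  rcases le_or_gt |x| β.rOut with h | h
  · rw [truncatedPow_of_abs_le m h]
    exact mul_le_of_le_one_right (hm.pow_nonneg x) β.le_one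
  · rw [truncatedPow_of_lt_abs m h, β.zero_of_le_dist (by simpa using h.le), mul_zero]

/-- The power `x ^ m` cut off by the bump function `β`, as a Schwartz function. -/
def bumpPow : 𝓢(ℝ, ℂ) :=
  HasCompactSupport.toSchwartzMap (f := fun x => ((x ^ m * β x : ℝ) : ℂ))
    ((hasCompactSupport_pow_mul_bump β m).comp_left Complex.ofReal_zero)
    (Complex.ofRealCLM.contDiff.comp (contDiff_pow_mul_bump β m))

lemma bumpPow_apply (x : ℝ) : bumpPow β m x = ((x ^ m * β x : ℝ) : ℂ) := rfl

lemma iteratedDeriv_bumpPow_zero (j : ℕ) :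
    iteratedDeriv j (bumpPow β m) 0 = if j = m then (m.factorial : ℂ) else 0 := by
  have hgerm : bumpPow β m =ᶠ[𝓝 0] fun x => ((x ^ m : ℝ) : ℂ) := by
    filter_upwards [β.eventuallyEq_one] with x hx
    rw [bumpPow_apply, hx, Pi.one_apply, mul_one]
  rw [hgerm.iteratedDeriv_eq, iteratedDeriv_ofReal_comp (by fun_prop), iteratedDeriv_fun_pow_zero]
  split_ifs <;> simp

variable {m} in
lemma compensatedGenerator_bumpPow (hm : 1 < m) (b : ℝ) (ν : Measure ℝ) :
    compensatedGenerator b ν (bumpPow β m) = ((∫ r, r ^ m * β r ∂ν : ℝ) : ℂ) := by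
  have hzero : bumpPow β m 0 = 0 := by simp [bumpPow_apply, (zero_lt_one.trans hm).ne']
  have hderiv : deriv (bumpPow β m) 0 = 0 := by
    rw [← iteratedDeriv_one, iteratedDeriv_bumpPow_zero, if_neg hm.ne]
  simp only [compensatedGenerator, hzero, hderiv, bumpPow_apply, mul_zero, sub_zero, zero_add,
    integral_complex_ofReal]

lemma sum_range_mul_iteratedDeriv_bumpPow {p n : ℕ} (hpn : p < n) (x : ℝ) :
    ∑ k ∈ Finset.range n, (x : ℂ) ^ k / k.factorial * iteratedDeriv (2 * k) (bumpPow β (2 * p)) 0 =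
      (((2 * p).factorial / p.factorial * x ^ p : ℝ) : ℂ) := by
  simp only [iteratedDeriv_bumpPow_zero, mul_right_inj' two_ne_zero, mul_ite, mul_zero,
    Finset.sum_ite_eq', Finset.mem_range, hpn, if_true]
  push_cast
  ring

theorem exists_abs_integral_pow_mul_bump_sub_le {p n : ℕ} (hp : 0 < p) (hpn : p < n) :
    ∃ C, ∀ (μ ν : Measure ℝ) [IsProbabilityMeasure μ] [SFinite ν] (x t b D : ℝ), 0 ≤ x → 0 ≤ t →
      Integrable (fun r : ℝ => min |r| (r ^ 2)) ν → |b| + 2 * ∫ r, min |r| (r ^ 2) ∂ν ≤ D →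
      (∀ u, charFun μ u = Complex.exp (-(x * u ^ 2) + t * compensatedExponent b ν u)) →
      |∫ y, y ^ (2 * p) * β y ∂μ - (2 * p).factorial / p.factorial * x ^ p
        - t * ∫ r, r ^ (2 * p) * β r ∂ν| ≤ C * (x ^ n + t * D * (x + t * D)) := by
  obtain ⟨C, hexpansion⟩ := exists_norm_integral_sub_expansion_le (bumpPow β (2 * p)) n
  refine ⟨C, fun μ ν _ _ x t b D hx ht hν hD hμ => ?_⟩
  have h := hexpansion μ ν x t b D hx ht hν hD hμ
  rw [compensatedGenerator_bumpPow β (by omega), sum_range_mul_iteratedDeriv_bumpPow β hpn] at h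
  simp only [bumpPow_apply, integral_complex_ofReal] at h
  rwa [← Complex.ofReal_mul, ← Complex.ofReal_sub, ← Complex.ofReal_sub, Complex.norm_real] at h

end BumpPow

/-! ### Lévy measures with a stable-like density -/

lemma integrable_of_integrableOn_Ioi {f : ℝ → ℝ} (hpos : IntegrableOn f (Ioi 0))
    (hneg : IntegrableOn (fun x => f (-x)) (Ioi 0)) : Integrable f := by
  have hpos' := (integrable_indicator_iff measurableSet_Ioi).2 hpos
  have hneg' := ((integrable_indicator_iff measurableSet_Ioi).2 hneg).comp_neg
  refine (hpos'.add hneg').congr ?_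
  filter_upwards [Measure.ae_ne volume (0 : ℝ)] with x hx
  rcases hx.lt_or_gt with h | h <;> simp [h, h.not_gt]

lemma integral_eq_setIntegral_Ioi_add {f : ℝ → ℝ} (hf : Integrable f) :
    ∫ x, f x = (∫ x in Ioi 0, f x) + ∫ x in Ioi 0, f (-x) := by
  rw [integral_comp_neg_Ioi, neg_zero, add_comm]
  exact (intervalIntegral.integral_Iic_add_Ioi hf.integrableOn hf.integrableOn).symm

section LevyMeasure

variable {Y Cp Cm : ℝ} {q : ℝ → ℝ} {E : Type*} [NormedAddCommGroup E] [NormedSpace ℝ E]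

instance : SFinite (levyMeasure Y Cp Cm q) := by
  unfold levyMeasure
  infer_instance

lemma levyDensity_eq_mul (Y Cp Cm : ℝ) (q : ℝ → ℝ) (x : ℝ) :
    levyDensity Y Cp Cm q x = q x * levyDensity Y Cp Cm 1 x := by
  simp only [levyDensity, Pi.one_apply]
  ring

lemma levyDensity_nonneg (hCp : 0 ≤ Cp) (hCm : 0 ≤ Cm) (hq : ∀ x, 0 ≤ q x) (x : ℝ) :
    0 ≤ levyDensity Y Cp Cm q x := by
  have := hq x
  unfold levyDensity
  split_ifs <;> positivity

lemma measurable_levyDensity (Y Cp Cm : ℝ) (hq : Measurable q) :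
    Measurable (levyDensity Y Cp Cm q) :=
  ((Measurable.ite measurableSet_Ioi measurable_const
    (Measurable.ite measurableSet_Iio measurable_const measurable_const)).mul hq).mul
    (measurable_abs.pow_const _)

lemma integrable_levyMeasure_iff (hCp : 0 ≤ Cp) (hCm : 0 ≤ Cm) (hqm : Measurable q)
    (hq : ∀ x, 0 ≤ q x) {g : ℝ → E} :
    Integrable g (levyMeasure Y Cp Cm q) ↔ Integrable fun x => levyDensity Y Cp Cm q x • g x := by
  unfold levyMeasure
  rw [integrable_withDensity_iff_integrable_smul'
    (measurable_levyDensity Y Cp Cm hqm).ennreal_ofReal (.of_forall fun _ => ENNReal.ofReal_lt_top)]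
  simp only [ENNReal.toReal_ofReal (levyDensity_nonneg hCp hCm hq _)]

lemma integral_levyMeasure (hCp : 0 ≤ Cp) (hCm : 0 ≤ Cm) (hqm : Measurable q)
    (hq : ∀ x, 0 ≤ q x) (g : ℝ → E) :
    ∫ x, g x ∂levyMeasure Y Cp Cm q = ∫ x, levyDensity Y Cp Cm q x • g x := by
  unfold levyMeasure
  rw [integral_withDensity_eq_integral_toReal_smul
    (measurable_levyDensity Y Cp Cm hqm).ennreal_ofReal (.of_forall fun _ => ENNReal.ofReal_lt_top)]
  simp only [ENNReal.toReal_ofReal (levyDensity_nonneg hCp hCm hq _)]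

lemma integral_levyMeasure_eq_integral_stable (hCp : 0 ≤ Cp) (hCm : 0 ≤ Cm) (hqm : Measurable q)
    (hq : ∀ x, 0 ≤ q x) (g : ℝ → ℝ) :
    ∫ x, g x ∂levyMeasure Y Cp Cm q = ∫ x, q x * g x ∂levyMeasure Y Cp Cm 1 := by
  rw [integral_levyMeasure hCp hCm hqm hq,
    integral_levyMeasure hCp hCm measurable_one (fun _ => zero_le_one)]
  refine integral_congr_ae (.of_forall fun x => ?_)
  simp only [levyDensity_eq_mul Y Cp Cm q, smul_eq_mul]
  ring

lemma integrable_levyMeasure_of_bounded (hCp : 0 ≤ Cp) (hCm : 0 ≤ Cm) (hqm : Measurable q)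
    (hq : ∀ x, 0 ≤ q x) {M : ℝ} (hqM : ∀ x, q x ≤ M) {g : ℝ → ℝ}
    (hg : Integrable g (levyMeasure Y Cp Cm 1)) : Integrable g (levyMeasure Y Cp Cm q) := by
  rw [integrable_levyMeasure_iff hCp hCm measurable_one fun _ => zero_le_one] at hg
  rw [integrable_levyMeasure_iff hCp hCm hqm hq]
  refine (hg.bdd_mul hqm.aestronglyMeasurable
    (.of_forall fun x => (abs_of_nonneg (hq x)).trans_le (hqM x))).congr (.of_forall fun x => ?_)
  simp only [levyDensity_eq_mul Y Cp Cm q, smul_eq_mul, mul_assoc]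

lemma integral_levyMeasure_comp_inv_mul (hCp : 0 ≤ Cp) (hCm : 0 ≤ Cm) (hqm : Measurable q)
    (hq : ∀ x, 0 ≤ q x) {e : ℝ} (he : 0 < e) (g : ℝ → E) :
    ∫ y, g (e⁻¹ * y) ∂levyMeasure Y Cp Cm q =
      e ^ (-Y) • ∫ r, g r ∂levyMeasure Y Cp Cm fun r => q (e * r) := by
  have hdensity (y : ℝ) : levyDensity Y Cp Cm q y =
      e ^ (-1 - Y) * levyDensity Y Cp Cm (fun r => q (e * r)) (e⁻¹ * y) := by
    have hrpow : |y| ^ (-1 - Y) = e ^ (-1 - Y) * |e⁻¹ * y| ^ (-1 - Y) := by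
      rw [← Real.mul_rpow he.le (abs_nonneg _), abs_mul, abs_of_pos (inv_pos.2 he),
        mul_inv_cancel_left₀ he.ne']
    have hsign : e⁻¹ * y < 0 ↔ y < 0 := smul_neg_iff_of_pos_left (inv_pos.2 he)
    simp only [levyDensity, hrpow, mul_pos_iff_of_pos_left (inv_pos.2 he), hsign,
      mul_inv_cancel_left₀ he.ne']
    ring
  have hexp : e ^ (-1 - Y) * e = e ^ (-Y) := by
    rw [← Real.rpow_add_one he.ne']
    ring_nf
  rw [integral_levyMeasure hCp hCm hqm hq,
    integral_levyMeasure hCp hCm (by fun_prop) (fun r => hq (e * r))]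
  simp only [hdensity, mul_smul]
  rw [integral_smul, Measure.integral_comp_mul_left
    (fun r => levyDensity Y Cp Cm (fun r => q (e * r)) r • g r), inv_inv, abs_of_pos he, smul_smul,
    hexp]

section Even

variable {g : ℝ → ℝ}

lemma eqOn_levyDensity_one_smul (Y Cp Cm : ℝ) (g : ℝ → ℝ) :
    EqOn (fun x => levyDensity Y Cp Cm 1 x • g x) (fun x => Cp * (x ^ (-1 - Y) * g x)) (Ioi 0) := by
  intro x (hx : 0 < x)
  simp [levyDensity, hx, abs_of_pos hx, mul_assoc]

lemma eqOn_levyDensity_one_smul_neg (Y Cp Cm : ℝ) (heven : g.Even) :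
    EqOn (fun x => levyDensity Y Cp Cm 1 (-x) • g (-x)) (fun x => Cm * (x ^ (-1 - Y) * g x))
      (Ioi 0) := by
  intro x (hx : 0 < x)
  simp [levyDensity, hx, hx.not_gt, abs_of_pos hx, heven x, mul_assoc]

lemma integrable_stable_of_even (hCp : 0 ≤ Cp) (hCm : 0 ≤ Cm) (heven : g.Even)
    (hg : IntegrableOn (fun x => x ^ (-1 - Y) * g x) (Ioi 0)) :
    Integrable g (levyMeasure Y Cp Cm 1) := by
  rw [integrable_levyMeasure_iff hCp hCm measurable_one fun _ => zero_le_one]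
  have hpos : IntegrableOn (fun x => Cp * (x ^ (-1 - Y) * g x)) (Ioi 0) := hg.const_mul Cp
  have hneg : IntegrableOn (fun x => Cm * (x ^ (-1 - Y) * g x)) (Ioi 0) := hg.const_mul Cm
  exact integrable_of_integrableOn_Ioi
    (hpos.congr_fun (eqOn_levyDensity_one_smul Y Cp Cm g).symm measurableSet_Ioi)
    (hneg.congr_fun (eqOn_levyDensity_one_smul_neg Y Cp Cm heven).symm measurableSet_Ioi)

lemma integral_stable_of_even (hCp : 0 ≤ Cp) (hCm : 0 ≤ Cm) (heven : g.Even)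
    (hg : IntegrableOn (fun x => x ^ (-1 - Y) * g x) (Ioi 0)) :
    ∫ x, g x ∂levyMeasure Y Cp Cm 1 = (Cp + Cm) * ∫ x in Ioi 0, x ^ (-1 - Y) * g x := by
  have hint := (integrable_levyMeasure_iff hCp hCm measurable_one fun _ => zero_le_one).1
    (integrable_stable_of_even hCp hCm heven hg)
  rw [integral_levyMeasure hCp hCm measurable_one fun _ => zero_le_one,
    integral_eq_setIntegral_Ioi_add hint,
    setIntegral_congr_fun measurableSet_Ioi (eqOn_levyDensity_one_smul Y Cp Cm g),
    setIntegral_congr_fun measurableSet_Ioi (eqOn_levyDensity_one_smul_neg Y Cp Cm heven),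
    integral_const_mul, integral_const_mul, add_mul]

end Even

lemma integrable_min_abs_sq_levyMeasure_one (hCp : 0 ≤ Cp) (hCm : 0 ≤ Cm) (hY1 : 1 < Y)
    (hY2 : Y < 2) : Integrable (fun r : ℝ => min |r| (r ^ 2)) (levyMeasure Y Cp Cm 1) := by
  refine integrable_stable_of_even hCp hCm (fun r => by simp) ?_
  rw [← Ioc_union_Ioi_eq_Ioi zero_le_one]
  refine IntegrableOn.union ?_ ?_
  · have hpow : IntegrableOn (fun r : ℝ => r ^ (1 - Y)) (Ioc 0 1) :=
      (intervalIntegrable_iff_integrableOn_Ioc_of_le zero_le_one).1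
        (intervalIntegral.intervalIntegrable_rpow' (by linarith))
    refine hpow.congr_fun (fun r hr => ?_) measurableSet_Ioc
    simp only
    rw [abs_of_pos hr.1, min_eq_right (by nlinarith [hr.1, hr.2]), ← Real.rpow_add_natCast hr.1.ne']
    norm_num
    ring_nf
  · refine (integrableOn_Ioi_rpow_of_lt (neg_lt_neg hY1) one_pos).congr_fun
      (fun r (hr : 1 < r) => ?_) measurableSet_Ioi
    have hr0 : 0 < r := one_pos.trans hr
    simp only
    rw [abs_of_pos hr0, min_eq_left (by nlinarith), ← Real.rpow_add_one hr0.ne']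
    ring_nf

lemma integrable_min_abs_sq_levyMeasure (hCp : 0 ≤ Cp) (hCm : 0 ≤ Cm) (hY1 : 1 < Y)
    (hY2 : Y < 2) (hqm : Measurable q) (hq : ∀ x, 0 ≤ q x) {M : ℝ} (hqM : ∀ x, q x ≤ M) :
    Integrable (fun r : ℝ => min |r| (r ^ 2)) (levyMeasure Y Cp Cm q) :=
  integrable_levyMeasure_of_bounded hCp hCm hqm hq hqM
    (integrable_min_abs_sq_levyMeasure_one hCp hCm hY1 hY2)

lemma integral_min_abs_sq_levyMeasure_le (hCp : 0 ≤ Cp) (hCm : 0 ≤ Cm) (hY1 : 1 < Y)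
    (hY2 : Y < 2) (hqm : Measurable q) (hq : ∀ x, 0 ≤ q x) {M : ℝ} (hqM : ∀ x, q x ≤ M) :
    ∫ r, min |r| (r ^ 2) ∂levyMeasure Y Cp Cm q ≤
      M * ∫ r, min |r| (r ^ 2) ∂levyMeasure Y Cp Cm 1 := by
  have hnonneg (r : ℝ) : 0 ≤ min |r| (r ^ 2) := le_min (abs_nonneg r) (sq_nonneg r)
  rw [integral_levyMeasure_eq_integral_stable hCp hCm hqm hq, ← integral_const_mul]
  exact integral_mono_of_nonneg (.of_forall fun r => mul_nonneg (hq r) (hnonneg r))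
    ((integrable_min_abs_sq_levyMeasure_one hCp hCm hY1 hY2).const_mul M)
    (.of_forall fun r => mul_le_mul_of_nonneg_right (hqM r) (hnonneg r))

lemma even_truncatedPow {m : ℕ} (hm : Even m) (R : ℝ) : (truncatedPow m R).Even := fun x => by
  simp [truncatedPow, indicator, hm.neg_pow]

lemma eqOn_rpow_mul_truncatedPow (Y : ℝ) (m : ℕ) (R : ℝ) :
    EqOn (fun x => x ^ (-1 - Y) * truncatedPow m R x)
      ((Ioc 0 R).indicator fun x => x ^ (m - Y - 1)) (Ioi 0) := by
  intro x (hx : 0 < x)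
  rcases le_or_gt x R with h | h
  · simp only [truncatedPow_of_abs_le m ((abs_of_pos hx).trans_le h),
      indicator_of_mem (show x ∈ Ioc 0 R from ⟨hx, h⟩), ← Real.rpow_add_natCast hx.ne']
    ring_nf
  · simp only [truncatedPow_of_lt_abs m (h.trans_eq (abs_of_pos hx).symm), mul_zero,
      indicator_of_notMem (show x ∉ Ioc 0 R from fun hx' => h.not_ge hx'.2)]

lemma integrableOn_rpow_mul_truncatedPow {m : ℕ} (hYm : Y < m) (R : ℝ) :
    IntegrableOn (fun x => x ^ (-1 - Y) * truncatedPow m R x) (Ioi 0) := by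
  refine IntegrableOn.congr_fun ?_ (eqOn_rpow_mul_truncatedPow Y m R).symm measurableSet_Ioi
  refine ((integrable_indicator_iff measurableSet_Ioc).2 ?_).integrableOn
  rcases le_total 0 R with hR | hR
  · exact (intervalIntegrable_iff_integrableOn_Ioc_of_le hR).1
      (intervalIntegral.intervalIntegrable_rpow' (by linarith))
  · simp [Ioc_eq_empty_of_le hR]

lemma integrable_truncatedPow_levyMeasure_one (hCp : 0 ≤ Cp) (hCm : 0 ≤ Cm) {m : ℕ} (hm : Even m)
    (hYm : Y < m) (R : ℝ) : Integrable (truncatedPow m R) (levyMeasure Y Cp Cm 1) :=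
  integrable_stable_of_even hCp hCm (even_truncatedPow hm R)
    (integrableOn_rpow_mul_truncatedPow hYm R)

lemma integral_truncatedPow_levyMeasure_one (hCp : 0 ≤ Cp) (hCm : 0 ≤ Cm) {m : ℕ} (hm : Even m)
    (hYm : Y < m) {R : ℝ} (hR : 0 ≤ R) :
    ∫ r, truncatedPow m R r ∂levyMeasure Y Cp Cm 1 = (Cp + Cm) / (m - Y) * R ^ (m - Y) := by
  have hpos : 0 < (m : ℝ) - Y := sub_pos.2 hYm
  rw [integral_stable_of_even hCp hCm (even_truncatedPow hm R)
      (integrableOn_rpow_mul_truncatedPow hYm R),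
    setIntegral_congr_fun measurableSet_Ioi (eqOn_rpow_mul_truncatedPow Y m R),
    setIntegral_indicator measurableSet_Ioc, inter_eq_right.2 Ioc_subset_Ioi_self,
    ← intervalIntegral.integral_of_le hR, integral_rpow (Or.inl (by linarith)), sub_add_cancel,
    Real.zero_rpow hpos.ne']
  ring

lemma tendsto_integral_levyMeasure_comp_mul {ι : Type*} {l : Filter ι} [l.IsCountablyGenerated]
    (hCp : 0 ≤ Cp) (hCm : 0 ≤ Cm) (hqm : Measurable q) (hq : ∀ x, 0 ≤ q x) {M : ℝ}
    (hqM : ∀ x, q x ≤ M) (hq_lim : Tendsto q (𝓝[≠] 0) (𝓝 1)) {e : ι → ℝ}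
    (he : Tendsto e l (𝓝[≠] 0)) {g : ℝ → ℝ} (hg : Integrable g (levyMeasure Y Cp Cm 1)) :
    Tendsto (fun i => ∫ r, g r ∂levyMeasure Y Cp Cm fun r => q (e i * r)) l
      (𝓝 (∫ r, g r ∂levyMeasure Y Cp Cm 1)) := by
  have hne : ∀ᵐ r ∂levyMeasure Y Cp Cm 1, r ≠ 0 :=
    (withDensity_absolutelyContinuous volume _).ae_le (Measure.ae_ne volume 0)
  have hqe (i : ι) : Measurable fun r => q (e i * r) := hqm.comp (measurable_const_mul _)
  have hlim : Tendsto (fun i => ∫ r, q (e i * r) * g r ∂levyMeasure Y Cp Cm 1) l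
      (𝓝 (∫ r, g r ∂levyMeasure Y Cp Cm 1)) := by
    refine tendsto_integral_filter_of_dominated_convergence (fun r => M * ‖g r‖)
      (.of_forall fun i => (hqe i).aestronglyMeasurable.mul hg.1)
      (.of_forall fun i => .of_forall fun r => ?_) (hg.norm.const_mul M)
      (hne.mono fun r hr => ?_)
    · rw [norm_mul, Real.norm_of_nonneg (hq _)]
      exact mul_le_mul_of_nonneg_right (hqM _) (norm_nonneg _)
    · have her : Tendsto (fun i => e i * r) l (𝓝[≠] 0) := by
        refine tendsto_nhdsWithin_iff.2 ⟨?_, ?_⟩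
        · simpa using (tendsto_nhds_of_tendsto_nhdsWithin he).mul_const r
        · filter_upwards [(tendsto_nhdsWithin_iff.1 he).2] with i hi using mul_ne_zero hi hr
      simpa using (hq_lim.comp her).mul_const (g r)
  exact hlim.congr fun i =>
    (integral_levyMeasure_eq_integral_stable hCp hCm (hqe i) (fun r => hq _) g).symm

end LevyMeasure

/-! ### Asymptotics of truncated moments -/

section TruncatedMoment

variable {ι : Type*} {l : Filter ι} {x t b e : ι → ℝ} {Y Cp Cm M : ℝ} {q : ℝ → ℝ}
  {p n : ℕ}

lemma lt_two_mul_cast (hY2 : Y < 2) (hp : 0 < p) : Y < (2 * p : ℕ) :=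
  hY2.trans_le (by exact_mod_cast (by omega : 2 ≤ 2 * p))

lemma integrable_pow_mul_bump_levyMeasure_one (β : ContDiffBump (0 : ℝ)) (hp : 0 < p)
    (hCp : 0 ≤ Cp) (hCm : 0 ≤ Cm) (hY2 : Y < 2) :
    Integrable (fun r => r ^ (2 * p) * β r) (levyMeasure Y Cp Cm 1) := by
  have heven : Even (2 * p) := even_two_mul p
  refine (integrable_truncatedPow_levyMeasure_one hCp hCm heven (lt_two_mul_cast hY2 hp)
    β.rOut).mono' (contDiff_pow_mul_bump β _).continuous.aestronglyMeasurable
    (.of_forall fun r => ?_)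
  rw [Real.norm_of_nonneg (mul_nonneg (heven.pow_nonneg r) β.nonneg)]
  exact pow_mul_bump_le_truncatedPow β heven r

lemma tendsto_expansion_error_div (C D : ℝ) (hx : Tendsto x l (𝓝 0)) (ht : Tendsto t l (𝓝 0))
    (ht0 : ∀ᶠ i in l, 0 < t i) (hxt : (fun i => x i ^ n) =o[l] t) :
    Tendsto (fun i => C * (x i ^ n + t i * D * (x i + t i * D)) / t i) l (𝓝 0) := by
  have hlim : Tendsto (fun i => C * (x i ^ n / t i + D * (x i + t i * D))) l (𝓝 0) := by
    simpa using ((hxt.tendsto_div_nhds_zero.add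
      ((hx.add (ht.mul_const D)).const_mul D)).const_mul C)
  refine hlim.congr' (ht0.mono fun i hi => ?_)
  field_simp

variable [l.IsCountablyGenerated] {μ : ι → Measure ℝ} [∀ i, IsProbabilityMeasure (μ i)]

theorem tendsto_integral_pow_mul_bump (β : ContDiffBump (0 : ℝ)) (hCp : 0 ≤ Cp) (hCm : 0 ≤ Cm)
    (hY1 : 1 < Y) (hY2 : Y < 2) (hqm : Measurable q) (hq : ∀ r, 0 ≤ q r) (hqM : ∀ r, q r ≤ M)
    (hq_lim : Tendsto q (𝓝[≠] 0) (𝓝 1)) (hp : 0 < p) (hpn : p < n)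
    (hx0 : ∀ᶠ i in l, 0 ≤ x i) (ht0 : ∀ᶠ i in l, 0 < t i) (hx : Tendsto x l (𝓝 0))
    (ht : Tendsto t l (𝓝 0)) (hxt : (fun i => x i ^ n) =o[l] t) (hb : b =O[l] (1 : ι → ℝ))
    (he : Tendsto e l (𝓝[≠] 0))
    (hμ : ∀ᶠ i in l, ∀ u, charFun (μ i) u = Complex.exp (-(x i * u ^ 2) +
      t i * compensatedExponent (b i) (levyMeasure Y Cp Cm fun r => q (e i * r)) u)) :
    Tendsto (fun i => (∫ y, y ^ (2 * p) * β y ∂μ i - (2 * p).factorial / p.factorial * x i ^ p)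
      / t i) l (𝓝 (∫ r, r ^ (2 * p) * β r ∂levyMeasure Y Cp Cm 1)) := by
  obtain ⟨B, hB⟩ := hb.bound
  obtain ⟨C, hexpansion⟩ := exists_abs_integral_pow_mul_bump_sub_le β hp hpn
  set D := B + 2 * (M * ∫ r, min |r| (r ^ 2) ∂levyMeasure Y Cp Cm 1)
  have hjump := tendsto_integral_levyMeasure_comp_mul (g := fun r => r ^ (2 * p) * β r) hCp hCm
    hqm hq hqM hq_lim he (integrable_pow_mul_bump_levyMeasure_one β hp hCp hCm hY2)
  have herror : Tendsto (fun i => (∫ y, y ^ (2 * p) * β y ∂μ i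
      - (2 * p).factorial / p.factorial * x i ^ p) / t i
      - ∫ r, r ^ (2 * p) * β r ∂levyMeasure Y Cp Cm fun r => q (e i * r)) l (𝓝 0) := by
    refine squeeze_zero_norm' ?_ (tendsto_expansion_error_div C D hx ht ht0 hxt)
    filter_upwards [hx0, ht0, hB, hμ] with i hxi hti hBi hμi
    have hqe : Measurable fun r => q (e i * r) := hqm.comp (measurable_const_mul _)
    have hD : |b i| + 2 * ∫ r, min |r| (r ^ 2) ∂levyMeasure Y Cp Cm (fun r => q (e i * r)) ≤ D :=
      add_le_add (by simpa using hBi) (mul_le_mul_of_nonneg_left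
        (integral_min_abs_sq_levyMeasure_le hCp hCm hY1 hY2 hqe (fun r => hq _) fun r => hqM _)
        zero_le_two)
    have h := hexpansion (μ i) _ (x i) (t i) (b i) D hxi hti.le
      (integrable_min_abs_sq_levyMeasure hCp hCm hY1 hY2 hqe (fun r => hq _) fun r => hqM _) hD hμi
    rw [div_sub' hti.ne', norm_div, Real.norm_of_nonneg hti.le, Real.norm_eq_abs]
    gcongr
  simpa using herror.add hjump

lemma exists_contDiffBump_integral_lt (hCp : 0 ≤ Cp) (hCm : 0 ≤ Cm) (hY2 : Y < 2) (hp : 0 < p)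
    {a : ℝ} (ha : (Cp + Cm) / ((2 * p : ℕ) - Y) < a) :
    ∃ β : ContDiffBump (0 : ℝ), β.rIn = 1 ∧
      ∫ r, r ^ (2 * p) * β r ∂levyMeasure Y Cp Cm 1 < a := by
  have hYp := lt_two_mul_cast hY2 hp
  have hcont : Tendsto (fun R : ℝ => (Cp + Cm) / ((2 * p : ℕ) - Y) * R ^ ((2 * p : ℕ) - Y))
      (𝓝[>] 1) (𝓝 ((Cp + Cm) / ((2 * p : ℕ) - Y) * 1 ^ ((2 * p : ℕ) - Y))) :=
    ((Real.continuousAt_rpow_const _ _ (Or.inl one_ne_zero)).tendsto.mono_left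
      nhdsWithin_le_nhds).const_mul _
  rw [Real.one_rpow, mul_one] at hcont
  obtain ⟨R, hRa, hR⟩ := ((hcont.eventually_lt_const ha).and self_mem_nhdsWithin).exists
  refine ⟨⟨1, R, one_pos, hR⟩, rfl, lt_of_le_of_lt ?_ hRa⟩
  rw [← integral_truncatedPow_levyMeasure_one hCp hCm (even_two_mul p) hYp (one_pos.trans hR).le]
  exact integral_mono (integrable_pow_mul_bump_levyMeasure_one _ hp hCp hCm hY2)
    (integrable_truncatedPow_levyMeasure_one hCp hCm (even_two_mul p) hYp R)
    (pow_mul_bump_le_truncatedPow ⟨1, R, one_pos, hR⟩ (even_two_mul p))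

lemma exists_contDiffBump_lt_integral (hCp : 0 ≤ Cp) (hCm : 0 ≤ Cm) (hY2 : Y < 2) (hp : 0 < p)
    {a : ℝ} (ha : a < (Cp + Cm) / ((2 * p : ℕ) - Y)) :
    ∃ β : ContDiffBump (0 : ℝ), β.rOut = 1 ∧
      a < ∫ r, r ^ (2 * p) * β r ∂levyMeasure Y Cp Cm 1 := by
  have hYp := lt_two_mul_cast hY2 hp
  have hcont : Tendsto (fun R : ℝ => (Cp + Cm) / ((2 * p : ℕ) - Y) * R ^ ((2 * p : ℕ) - Y))
      (𝓝[<] 1) (𝓝 ((Cp + Cm) / ((2 * p : ℕ) - Y) * 1 ^ ((2 * p : ℕ) - Y))) :=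
    ((Real.continuousAt_rpow_const _ _ (Or.inl one_ne_zero)).tendsto.mono_left
      nhdsWithin_le_nhds).const_mul _
  rw [Real.one_rpow, mul_one] at hcont
  obtain ⟨R, hRa, hR0, hR1⟩ :=
    ((hcont.eventually_const_lt ha).and (Ioo_mem_nhdsLT zero_lt_one)).exists
  refine ⟨⟨R, 1, hR0, hR1⟩, rfl, lt_of_lt_of_le hRa ?_⟩
  rw [← integral_truncatedPow_levyMeasure_one hCp hCm (even_two_mul p) hYp hR0.le]
  exact integral_mono (integrable_truncatedPow_levyMeasure_one hCp hCm (even_two_mul p) hYp R)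
    (integrable_pow_mul_bump_levyMeasure_one _ hp hCp hCm hY2)
    (truncatedPow_le_pow_mul_bump ⟨R, 1, hR0, hR1⟩ (even_two_mul p))

/-- The truncated power is sandwiched between two bump-truncated powers whose limits are
arbitrarily close. -/
theorem tendsto_integral_truncatedPow (hCp : 0 ≤ Cp) (hCm : 0 ≤ Cm)
    (hY1 : 1 < Y) (hY2 : Y < 2) (hqm : Measurable q) (hq : ∀ r, 0 ≤ q r) (hqM : ∀ r, q r ≤ M)
    (hq_lim : Tendsto q (𝓝[≠] 0) (𝓝 1)) (hp : 0 < p) (hpn : p < n)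
    (hx0 : ∀ᶠ i in l, 0 ≤ x i) (ht0 : ∀ᶠ i in l, 0 < t i) (hx : Tendsto x l (𝓝 0))
    (ht : Tendsto t l (𝓝 0)) (hxt : (fun i => x i ^ n) =o[l] t) (hb : b =O[l] (1 : ι → ℝ))
    (he : Tendsto e l (𝓝[≠] 0))
    (hμ : ∀ᶠ i in l, ∀ u, charFun (μ i) u = Complex.exp (-(x i * u ^ 2) +
      t i * compensatedExponent (b i) (levyMeasure Y Cp Cm fun r => q (e i * r)) u)) :
    Tendsto (fun i => (∫ y, truncatedPow (2 * p) 1 y ∂μ i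
      - (2 * p).factorial / p.factorial * x i ^ p) / t i) l
      (𝓝 ((Cp + Cm) / ((2 * p : ℕ) - Y))) := by
  have hsmooth (β : ContDiffBump (0 : ℝ)) := tendsto_integral_pow_mul_bump β hCp hCm hY1 hY2 hqm
    hq hqM hq_lim hp hpn hx0 ht0 hx ht hxt hb he hμ
  refine tendsto_order.2 ⟨fun a ha => ?_, fun a ha => ?_⟩
  · obtain ⟨β, hβ, haβ⟩ := exists_contDiffBump_lt_integral hCp hCm hY2 hp ha
    filter_upwards [(hsmooth β).eventually_const_lt haβ, ht0] with i hi hti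
    refine hi.trans_le ((div_le_div_iff_of_pos_right hti).2 (sub_le_sub_right ?_ _))
    exact integral_mono (integrable_pow_mul_bump β _ _) (integrable_truncatedPow _ zero_le_one _)
      (hβ ▸ pow_mul_bump_le_truncatedPow β (even_two_mul p))
  · obtain ⟨β, hβ, haβ⟩ := exists_contDiffBump_integral_lt hCp hCm hY2 hp ha
    filter_upwards [(hsmooth β).eventually_lt_const haβ, ht0] with i hi hti
    refine lt_of_le_of_lt ((div_le_div_iff_of_pos_right hti).2 (sub_le_sub_right ?_ _)) hi
    exact integral_mono (integrable_truncatedPow _ zero_le_one _) (integrable_pow_mul_bump β _ _)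
      (hβ ▸ truncatedPow_le_pow_mul_bump β (even_two_mul p))

end TruncatedMoment

/-! ### The rescaled increment -/

/-- The drift of `psiJ` once every jump, rather than only those of size at most `1`, is
compensated. -/
def compensatedDrift (b Y Cp Cm : ℝ) (q : ℝ → ℝ) : ℝ :=
  b + ∫ x, {x : ℝ | 1 < |x|}.indicator id x ∂levyMeasure Y Cp Cm q

lemma integrable_indicator_one_lt_abs {ν : Measure ℝ}
    (hν : Integrable (fun r : ℝ => min |r| (r ^ 2)) ν) :
    Integrable ({x : ℝ | 1 < |x|}.indicator id) ν := by
  have hmeas : MeasurableSet {x : ℝ | 1 < |x|} := measurableSet_lt (by fun_prop) (by fun_prop)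
  refine hν.mono' (measurable_id.indicator hmeas).aestronglyMeasurable (.of_forall fun x => ?_)
  by_cases hx : 1 < |x|
  · rw [indicator_of_mem (s := {x : ℝ | 1 < |x|}) hx, id, Real.norm_eq_abs, ← sq_abs]
    exact le_min le_rfl (by nlinarith)
  · rw [indicator_of_notMem (s := {x : ℝ | 1 < |x|}) hx, norm_zero]
    positivity

lemma psiJ_eq_compensatedExponent (b : ℝ) {Y Cp Cm : ℝ} {q : ℝ → ℝ}
    (hν : Integrable (fun r : ℝ => min |r| (r ^ 2)) (levyMeasure Y Cp Cm q)) (u : ℝ) :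
    psiJ b Y Cp Cm q u =
      compensatedExponent (compensatedDrift b Y Cp Cm q) (levyMeasure Y Cp Cm q) u := by
  have hsplit (x : ℝ) : Complex.exp (Complex.I * u * x) - 1 -
      (if |x| ≤ 1 then Complex.I * u * x else 0) =
      (Complex.exp (u * x * Complex.I) - 1 - u * x * Complex.I) +
        u * Complex.I * (({x : ℝ | 1 < |x|}.indicator id x : ℝ) : ℂ) := by
    have hcomm : Complex.I * u * x = u * x * Complex.I := by ring
    rcases le_or_gt |x| 1 with hx | hx
    · simp [indicator, hx, hx.not_gt, hcomm]
    · simp only [indicator, mem_ofPred_eq, hx, hx.not_ge, if_true, if_false, id, hcomm]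
      ring
  have htail : Integrable
      (fun x : ℝ => u * Complex.I * (({x : ℝ | 1 < |x|}.indicator id x : ℝ) : ℂ))
      (levyMeasure Y Cp Cm q) := (integrable_indicator_one_lt_abs hν).ofReal.const_mul _
  simp only [psiJ, hsplit]
  rw [integral_add (integrable_exp_mul_I_sub_one_sub hν u) htail, integral_const_mul,
    integral_complex_ofReal, compensatedExponent, compensatedDrift]
  push_cast
  ring

lemma compensatedExponent_inv_mul (b : ℝ) {Y Cp Cm : ℝ} {q : ℝ → ℝ} (hCp : 0 ≤ Cp)
    (hCm : 0 ≤ Cm) (hqm : Measurable q) (hq : ∀ x, 0 ≤ q x) {e : ℝ} (he : 0 < e) (u : ℝ) :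
    compensatedExponent b (levyMeasure Y Cp Cm q) (e⁻¹ * u) = (e ^ (-Y) : ℝ) *
      compensatedExponent (e ^ (Y - 1) * b) (levyMeasure Y Cp Cm fun r => q (e * r)) u := by
  have hscale := integral_levyMeasure_comp_inv_mul (Y := Y) hCp hCm hqm hq he
    fun r : ℝ => Complex.exp (u * r * Complex.I) - 1 - u * r * Complex.I
  have hrpow : e ^ (-Y) * e ^ (Y - 1) = e⁻¹ := by
    rw [← Real.rpow_add he, neg_add_eq_sub, sub_sub_cancel_left, Real.rpow_neg_one]
  have harg (r : ℝ) : ((e⁻¹ * u : ℝ) : ℂ) * r = u * (e⁻¹ * r : ℝ) := by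
    push_cast
    ring
  simp only [compensatedExponent, harg, hscale, Complex.real_smul, mul_add]
  rw [← hrpow]
  push_cast
  ring

section Law

variable {Ω : Type*} [MeasurableSpace Ω] {P : Measure Ω} [IsProbabilityMeasure P] {W X : Ω → ℝ}

lemma charFun_map_const_mul_add (hWm : Measurable W) (hW : P.map W = gaussianReal 0 1)
    (hX : Measurable X) (hindep : IndepFun W X P) (a u : ℝ) :
    charFun (P.map fun ω => a * W ω + X ω) u =
      Complex.exp (-((a ^ 2 / 2 : ℝ) * u ^ 2)) * charFun (P.map X) u := by
  have haW : P.map (fun ω => a * W ω) = (gaussianReal 0 1).map (a * ·) := by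
    rw [← hW, Measure.map_map (by fun_prop) hWm]
    rfl
  have hindep' : IndepFun (fun ω => a * W ω) X P :=
    hindep.comp (φ := (a * ·)) (by fun_prop) measurable_id
  rw [show (fun ω => a * W ω + X ω) = (fun ω => a * W ω) + X from rfl,
    hindep'.charFun_map_add_eq_mul (by fun_prop) (by fun_prop), Pi.mul_apply, haW,
    charFun_map_mul, charFun_gaussianReal]
  congr 2
  push_cast
  ring

lemma charFun_map_inv_mul_increment {b Y Cp Cm : ℝ} {q : ℝ → ℝ} (hCp : 0 ≤ Cp) (hCm : 0 ≤ Cm)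
    (hqm : Measurable q) (hq : ∀ x, 0 ≤ q x)
    (hν : Integrable (fun r : ℝ => min |r| (r ^ 2)) (levyMeasure Y Cp Cm q))
    (hWm : Measurable W) (hW : P.map W = gaussianReal 0 1) (hX : Measurable X)
    (hindep : IndepFun W X P) {h : ℝ} (hh : 0 ≤ h)
    (hXcf : ∀ u : ℝ, ∫ ω, Complex.exp (Complex.I * u * X ω) ∂P =
      Complex.exp (h * psiJ b Y Cp Cm q u)) (σ : ℝ) {e : ℝ} (he : 0 < e) (u : ℝ) :
    charFun (P.map fun ω => e⁻¹ * (σ * √h * W ω + X ω)) u =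
      Complex.exp (-((σ ^ 2 / 2 * (h * e ^ (-2 : ℝ)) : ℝ) * u ^ 2) + (h * e ^ (-Y) : ℝ) *
        compensatedExponent (e ^ (Y - 1) * compensatedDrift b Y Cp Cm q)
          (levyMeasure Y Cp Cm fun r => q (e * r)) u) := by
  have hjump (v : ℝ) : charFun (P.map X) v = Complex.exp (h * psiJ b Y Cp Cm q v) := by
    rw [charFun_apply_real, integral_map hX.aemeasurable (by fun_prop), ← hXcf]
    exact integral_congr_ae (.of_forall fun ω => by ring_nf)
  have he2 : e ^ (-2 : ℝ) = (e ^ 2)⁻¹ := by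
    rw [Real.rpow_neg he.le, Real.rpow_two]
  have hmap : P.map (fun ω => e⁻¹ * (σ * √h * W ω + X ω)) =
      (P.map fun ω => σ * √h * W ω + X ω).map (e⁻¹ * ·) := by
    rw [Measure.map_map (by fun_prop) (by fun_prop)]
    rfl
  rw [hmap, charFun_map_mul, charFun_map_const_mul_add hWm hW hX hindep, hjump,
    psiJ_eq_compensatedExponent b hν, compensatedExponent_inv_mul _ hCp hCm hqm hq he,
    ← Complex.exp_add, mul_pow, Real.sq_sqrt hh, he2]
  congr 1
  push_cast
  ring

end Law

/-! ### The variance -/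

lemma truncatedPow_eq_pow_mul (m : ℕ) {e : ℝ} (he : 0 < e) (x : ℝ) :
    truncatedPow m e x = e ^ m * truncatedPow m 1 (e⁻¹ * x) := by
  have hiff : |e⁻¹ * x| ≤ 1 ↔ |x| ≤ e := by
    rw [abs_mul, abs_of_pos (inv_pos.2 he), inv_mul_le_one₀ he]
  rcases le_or_gt |x| e with h | h
  · rw [truncatedPow_of_abs_le m h, truncatedPow_of_abs_le m (hiff.2 h), ← mul_pow,
      mul_inv_cancel_left₀ he.ne']
  · rw [truncatedPow_of_lt_abs m h, truncatedPow_of_lt_abs m (not_le.1 (hiff.not.2 h.not_ge)),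
      mul_zero]

lemma truncatedPow_pow (m : ℕ) {k : ℕ} (hk : k ≠ 0) (R x : ℝ) :
    truncatedPow m R x ^ k = truncatedPow (m * k) R x := by
  rcases le_or_gt |x| R with h | h
  · simp only [truncatedPow_of_abs_le _ h, pow_mul]
  · simp only [truncatedPow_of_lt_abs _ h, zero_pow hk]

lemma variance_truncatedPow {Ω : Type*} [MeasurableSpace Ω] {P : Measure Ω}
    [IsProbabilityMeasure P] {X : Ω → ℝ} (hX : Measurable X) (m : ℕ) {e : ℝ} (he : 0 < e) :
    variance (fun ω => truncatedPow m e (X ω)) P =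
      e ^ (m * 2) * (∫ x, truncatedPow (m * 2) 1 x ∂(P.map fun ω => e⁻¹ * X ω) -
        (∫ x, truncatedPow m 1 x ∂(P.map fun ω => e⁻¹ * X ω)) ^ 2) := by
  have hmoment (j : ℕ) : ∫ ω, truncatedPow j e (X ω) ∂P =
      e ^ j * ∫ x, truncatedPow j 1 x ∂(P.map fun ω => e⁻¹ * X ω) := by
    rw [integral_map (by fun_prop) (measurable_truncatedPow j 1).aestronglyMeasurable,
      ← integral_const_mul]
    exact integral_congr_ae (.of_forall fun ω => truncatedPow_eq_pow_mul j he _)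
  have hmemLp : MemLp (fun ω => truncatedPow m e (X ω)) 2 P :=
    .of_bound ((measurable_truncatedPow m e).comp hX).aestronglyMeasurable (e ^ m)
      (.of_forall fun ω => abs_truncatedPow_le m he.le _)
  rw [variance_eq_sub hmemLp]
  simp only [Pi.pow_apply, truncatedPow_pow m two_ne_zero, hmoment]
  ring

lemma tendsto_sub_sq_div {ι : Type*} {l : Filter ι} {M₂ M₄ x t : ι → ℝ} {c₂ c₄ : ℝ}
    (ht0 : ∀ᶠ i in l, t i ≠ 0) (hx : Tendsto x l (𝓝 0)) (ht : Tendsto t l (𝓝 0))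
    (h₂ : Tendsto (fun i => (M₂ i - 2 * x i) / t i) l (𝓝 c₂))
    (h₄ : Tendsto (fun i => (M₄ i - 12 * x i ^ 2) / t i) l (𝓝 c₄)) :
    Tendsto (fun i => (M₄ i - M₂ i ^ 2 - 8 * x i ^ 2) / t i) l (𝓝 c₄) := by
  have hlim : Tendsto (fun i => (M₄ i - 12 * x i ^ 2) / t i -
      (M₂ i - 2 * x i) / t i * (t i * ((M₂ i - 2 * x i) / t i) + 4 * x i)) l (𝓝 c₄) := by
    simpa using h₄.sub (h₂.mul ((ht.mul h₂).add (hx.const_mul 4)))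
  refine hlim.congr' (ht0.mono fun i hi => ?_)
  field_simp
  ring

/-! ### Thresholds -/

lemma tendsto_rpow_nhdsGT_zero {r : ℝ} (hr : 0 < r) :
    Tendsto (fun h : ℝ => h ^ r) (𝓝[>] 0) (𝓝 0) := by
  simpa [Real.zero_rpow hr.ne'] using
    (Real.continuousAt_rpow_const 0 r (Or.inr hr.le)).tendsto.mono_left nhdsWithin_le_nhds

section Threshold

variable {ε : ℝ → ℝ} {k : ℝ}

lemma tendsto_zero_of_mul_rpow_neg (hk : 0 < k)
    (hε : Tendsto (fun h => ε h * h ^ (-k)) (𝓝[>] 0) (𝓝 0)) : Tendsto ε (𝓝[>] 0) (𝓝 0) := by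
  have hlim := hε.mul (tendsto_rpow_nhdsGT_zero hk)
  rw [mul_zero] at hlim
  refine hlim.congr' ?_
  filter_upwards [self_mem_nhdsWithin] with h (hh : 0 < h)
  rw [mul_assoc, ← Real.rpow_add hh, neg_add_cancel, Real.rpow_zero, mul_one]

lemma tendsto_rpow_mul_rpow_neg (hεpos : ∀ᶠ h in 𝓝[>] 0, 0 < ε h)
    (hε : Tendsto (fun h => ε h * h ^ (-k)) (𝓝[>] 0) atTop) {r p : ℝ} (hp : 0 < p)
    (hr : p * k < r) : Tendsto (fun h => h ^ r * ε h ^ (-p)) (𝓝[>] 0) (𝓝 0) := by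
  have hlim := ((tendsto_rpow_neg_atTop hp).comp hε).mul
    (tendsto_rpow_nhdsGT_zero (sub_pos.2 hr))
  rw [mul_zero] at hlim
  refine hlim.congr' ?_
  filter_upwards [self_mem_nhdsWithin, hεpos] with h (hh : 0 < h) he
  simp only [Function.comp_apply]
  rw [Real.mul_rpow he.le (by positivity), ← Real.rpow_mul hh.le, mul_assoc, ← Real.rpow_add hh,
    mul_comm]
  ring_nf

lemma tendsto_mul_rpow_neg (hεpos : ∀ᶠ h in 𝓝[>] 0, 0 < ε h)
    (hε : Tendsto (fun h => ε h * h ^ (-k)) (𝓝[>] 0) atTop) {p : ℝ} (hp : 0 < p)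
    (hpk : p * k < 1) : Tendsto (fun h => h * ε h ^ (-p)) (𝓝[>] 0) (𝓝 0) := by
  simpa using tendsto_rpow_mul_rpow_neg hεpos hε hp hpk

/-- `h / ε ^ 2` is at most a positive power of `h`, so its high powers are negligible. -/
lemma exists_pow_mul_rpow_neg_isLittleO (hεpos : ∀ᶠ h in 𝓝[>] 0, 0 < ε h) (hk : k < 1 / 2)
    (hε : Tendsto (fun h => ε h * h ^ (-k)) (𝓝[>] 0) atTop) {Y : ℝ} (hY2 : Y < 2) (m : ℕ) :
    ∃ n, m < n ∧ ∀ c : ℝ, (fun h => (c * (h * ε h ^ (-2 : ℝ))) ^ n)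
      =o[𝓝[>] 0] fun h => h * ε h ^ (-Y) := by
  obtain ⟨j, hj⟩ := exists_nat_gt ((1 - Y * k) / (1 - 2 * k))
  set n := j + m + 1
  have hjn : (j : ℝ) + 1 ≤ n := by exact_mod_cast (by omega : j + 1 ≤ n)
  have hexp : (2 * n - Y) * k < n - 1 := by
    have := hj.trans_le ((le_add_of_nonneg_right zero_le_one).trans hjn)
    rw [div_lt_iff₀ (by linarith)] at this
    linarith
  refine ⟨n, by omega, fun c => isLittleO_of_tendsto' ?_ ?_⟩
  · filter_upwards [self_mem_nhdsWithin, hεpos] with h (hh : 0 < h) he h0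
    exact absurd h0 (by positivity)
  have hlim := (tendsto_rpow_mul_rpow_neg hεpos hε (by linarith) hexp).const_mul (c ^ n)
  rw [mul_zero] at hlim
  refine hlim.congr' ?_
  filter_upwards [self_mem_nhdsWithin, hεpos] with h (hh : 0 < h) he
  have hεexp : ε h ^ (-(2 * (n : ℝ) - Y)) = (ε h ^ (-2 : ℝ)) ^ n / ε h ^ (-Y) := by
    rw [← Real.rpow_mul_natCast he.le, ← Real.rpow_sub he]
    ring_nf
  rw [hεexp, Real.rpow_sub_one hh.ne', Real.rpow_natCast, mul_pow, mul_pow]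
  field_simp

end Threshold

lemma sub_div_mul_rpow_four_sub {h e : ℝ} (hh : 0 < h) (he : 0 < e) (σ Y v c : ℝ) :
    (e ^ 4 * v - (2 * σ ^ 4 * h ^ 2 + c * h * e ^ (4 - Y))) / (h * e ^ (4 - Y)) =
      (v - 8 * (σ ^ 2 / 2 * (h * e ^ (-2 : ℝ))) ^ 2) / (h * e ^ (-Y)) - c := by
  have hsplit : e ^ (4 - Y) = e ^ 4 * e ^ (-Y) := by
    rw [sub_eq_add_neg, Real.rpow_add he]
    norm_cast
  have hsq : e ^ (-2 : ℝ) = (e ^ 2)⁻¹ := by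
    rw [Real.rpow_neg he.le]
    norm_cast
  rw [hsplit, hsq]
  field_simp
  ring

/-! ### Conclusion -/

section Increment

variable {Ω : Type*} [MeasurableSpace Ω] {P : Measure Ω} [IsProbabilityMeasure P]
  {Y Cp Cm b : ℝ} {q : ℝ → ℝ} {J : ℝ → Ω → ℝ} {W : Ω → ℝ} {ε : ℝ → ℝ} {k : ℝ}

theorem tendsto_integral_truncatedPow_increment (hY1 : 1 < Y) (hY2 : Y < 2) (hCp : 0 ≤ Cp)
    (hCm : 0 ≤ Cm) (hqm : Measurable q) (hq : ∀ x, 0 ≤ q x) (hqM : ∃ M : ℝ, ∀ x, q x ≤ M)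
    (hq_lim : Tendsto q (𝓝[≠] 0) (𝓝 1)) (hWm : Measurable W) (hW : P.map W = gaussianReal 0 1)
    (hJm : ∀ h, Measurable (J h))
    (hJcf : ∀ h : ℝ, 0 < h → ∀ u : ℝ,
      ∫ ω, Complex.exp (Complex.I * u * J h ω) ∂P = Complex.exp (h * psiJ b Y Cp Cm q u))
    (hindep : ∀ h : ℝ, 0 < h → IndepFun W (J h) P) (σ : ℝ) (hk : k < 1 / 2)
    (hε_lo : Tendsto (fun h => ε h * h ^ (-k)) (𝓝[>] 0) atTop)
    (hε_hi : Tendsto ε (𝓝[>] 0) (𝓝[>] 0)) {p : ℕ} (hp : 0 < p) :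
    Tendsto (fun h => (∫ y, truncatedPow (2 * p) 1 y
          ∂P.map (fun ω => (ε h)⁻¹ * (σ * √h * W ω + J h ω)) -
        (2 * p).factorial / p.factorial * (σ ^ 2 / 2 * (h * ε h ^ (-2 : ℝ))) ^ p) /
      (h * ε h ^ (-Y))) (𝓝[>] 0) (𝓝 ((Cp + Cm) / ((2 * p : ℕ) - Y))) := by
  obtain ⟨M, hM⟩ := hqM
  have hεpos : ∀ᶠ h in 𝓝[>] (0 : ℝ), 0 < ε h := (tendsto_nhdsWithin_iff.1 hε_hi).2
  have hpos : ∀ᶠ h in 𝓝[>] (0 : ℝ), 0 < h := self_mem_nhdsWithin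
  obtain ⟨n, hpn, hn⟩ := exists_pow_mul_rpow_neg_isLittleO hεpos hk hε_lo hY2 p
  have hx : Tendsto (fun h => h * ε h ^ (-2 : ℝ)) (𝓝[>] 0) (𝓝 0) :=
    tendsto_mul_rpow_neg hεpos hε_lo two_pos (by linarith)
  have ht : Tendsto (fun h => h * ε h ^ (-Y)) (𝓝[>] 0) (𝓝 0) :=
    tendsto_mul_rpow_neg hεpos hε_lo (by linarith) (by nlinarith)
  have hdrift : Tendsto (fun h => ε h ^ (Y - 1) * compensatedDrift b Y Cp Cm q) (𝓝[>] 0)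
      (𝓝 (0 * compensatedDrift b Y Cp Cm q)) :=
    ((tendsto_rpow_nhdsGT_zero (sub_pos.2 hY1)).comp hε_hi).mul_const _
  have (h : ℝ) : IsProbabilityMeasure (P.map fun ω => (ε h)⁻¹ * (σ * √h * W ω + J h ω)) :=
    Measure.isProbabilityMeasure_map (by fun_prop)
  refine tendsto_integral_truncatedPow hCp hCm hY1 hY2 hqm hq hM hq_lim hp hpn ?_ ?_
    (by simpa using hx.const_mul (σ ^ 2 / 2)) ht (hn _) (hdrift.isBigO_one ℝ)
    (hε_hi.mono_right (nhdsGT_le_nhdsNE 0)) ?_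
  · filter_upwards [hpos, hεpos] with h hh he using by positivity
  · filter_upwards [hpos, hεpos] with h hh he using by positivity
  · filter_upwards [hpos, hεpos] with h hh he u
    exact charFun_map_inv_mul_increment hCp hCm hqm hq
      (integrable_min_abs_sq_levyMeasure hCp hCm hY1 hY2 hqm hq hM) hWm hW (hJm h)
      (hindep h hh) hh.le (hJcf h hh) σ he u

end Increment

theorem variance_truncated_square_general
    {Ω : Type*} [MeasurableSpace Ω] (P : Measure Ω) [IsProbabilityMeasure P]
    (Y Cp Cm σ b : ℝ) (q : ℝ → ℝ) (hY1 : 1 < Y) (hY2 : Y < 2) (hCp : 0 ≤ Cp) (hCm : 0 ≤ Cm)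
    (hq_meas : Measurable q) (hq_nonneg : ∀ x, 0 ≤ q x) (hq_bdd : ∃ M : ℝ, ∀ x, q x ≤ M)
    (hq_lim : Tendsto q (𝓝[≠] 0) (𝓝 1))
    (J : ℝ → Ω → ℝ) (W : Ω → ℝ) (hWmeas : Measurable W) (hW : P.map W = gaussianReal 0 1)
    (hJmeas : ∀ h : ℝ, Measurable (J h))
    (hJcf : ∀ h : ℝ, 0 < h → ∀ u : ℝ,
      ∫ ω, Complex.exp (Complex.I * u * J h ω) ∂P = Complex.exp (h * psiJ b Y Cp Cm q u))
    (hindep : ∀ h : ℝ, 0 < h → IndepFun W (J h) P)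
    (ε : ℝ → ℝ) {k : ℝ} (hk : k < 1 / 2)
    (hε_lo : Tendsto (fun h => ε h * h ^ (-k)) (𝓝[>] 0) atTop)
    (hε_hi : Tendsto ε (𝓝[>] 0) (𝓝[>] 0)) :
    (fun h : ℝ =>
        variance (fun ω => Set.indicator {x : ℝ | |x| ≤ ε h} (fun x => x ^ 2)
          (σ * Real.sqrt h * W ω + J h ω)) P
        - (2 * σ ^ 4 * h ^ 2 + (Cp + Cm) / (4 - Y) * h * ε h ^ (4 - Y)))
      =o[𝓝[>] 0] fun h => h * ε h ^ (4 - Y) := by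
  have hpos : ∀ᶠ h in 𝓝[>] (0 : ℝ), 0 < h := self_mem_nhdsWithin
  have hεpos : ∀ᶠ h in 𝓝[>] (0 : ℝ), 0 < ε h := (tendsto_nhdsWithin_iff.1 hε_hi).2
  have hmoment {p : ℕ} (hp : 0 < p) := tendsto_integral_truncatedPow_increment hY1 hY2 hCp hCm
    hq_meas hq_nonneg hq_bdd hq_lim hWmeas hW hJmeas hJcf hindep σ hk hε_lo hε_hi hp
  have hx : Tendsto (fun h => h * ε h ^ (-2 : ℝ)) (𝓝[>] 0) (𝓝 0) :=
    tendsto_mul_rpow_neg hεpos hε_lo two_pos (by linarith)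
  have ht : Tendsto (fun h => h * ε h ^ (-Y)) (𝓝[>] 0) (𝓝 0) :=
    tendsto_mul_rpow_neg hεpos hε_lo (by linarith) (by nlinarith)
  have hlim : Tendsto (fun h => (∫ y, truncatedPow 4 1 y
          ∂P.map (fun ω => (ε h)⁻¹ * (σ * √h * W ω + J h ω)) -
        (∫ y, truncatedPow 2 1 y ∂P.map (fun ω => (ε h)⁻¹ * (σ * √h * W ω + J h ω))) ^ 2 -
        8 * (σ ^ 2 / 2 * (h * ε h ^ (-2 : ℝ))) ^ 2) / (h * ε h ^ (-Y))) (𝓝[>] 0)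
      (𝓝 ((Cp + Cm) / (4 - Y))) := by
    have h₂ := hmoment one_pos
    have h₄ := hmoment two_pos
    norm_num only [Nat.factorial, pow_one] at h₂ h₄
    exact tendsto_sub_sq_div
      ((hpos.and hεpos).mono fun h hh => (mul_pos hh.1 (Real.rpow_pos_of_pos hh.2 (-Y))).ne')
      (by simpa using hx.const_mul (σ ^ 2 / 2)) ht h₂ h₄
  refine (isLittleO_iff_tendsto' ?_).2 ?_
  · filter_upwards [hpos, hεpos] with h hh he h0
    exact absurd h0 (by positivity)
  · have herr := hlim.sub_const ((Cp + Cm) / (4 - Y))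
    rw [sub_self] at herr
    refine herr.congr' ?_
    filter_upwards [hpos, hεpos] with h hh he
    rw [← sub_div_mul_rpow_four_sub hh he,
      ← variance_truncatedPow (X := fun ω => σ * √h * W ω + J h ω) (by fun_prop) 2 he]
    rfl

/-- asymptotics of the variance of the truncated squared increment:
`Var(X_h² 1_{|X_h|≤ε}) = 2σ⁴h² + ((C₊+C₋)/(4−Y)) h ε^{4−Y} + o(h ε^{4−Y})`. -/
theorem variance_truncated_square
    {Ω : Type*} [MeasurableSpace Ω] (P : Measure Ω) [IsProbabilityMeasure P]
    (Y Cp Cm σ b : ℝ) (q : ℝ → ℝ)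
    (hY1 : 1 < Y) (hY2 : Y < 2)
    (hCp : 0 < Cp) (hCm : 0 < Cm) (hσ : 0 < σ)
    (hq_meas : Measurable q) (hq_nonneg : ∀ x, 0 ≤ q x)
    (hq_bdd : ∃ M : ℝ, ∀ x, q x ≤ M)
    (hq_lim : Tendsto q (𝓝[≠] (0 : ℝ)) (𝓝 1))
    (hq_taylor : ∃ αp αm : ℝ, αp ≠ 0 ∧ αm ≠ 0 ∧
      IntegrableOn (fun x => |q x - 1 - αp * x| * x ^ (-Y - 1)) (Set.Ioc (0 : ℝ) 1) ∧
      IntegrableOn (fun x => |q x - 1 - αm * x| * |x| ^ (-Y - 1)) (Set.Ico (-1 : ℝ) 0))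
    (hq_log : ∃ K M : ℝ, ∀ x : ℝ, M ≤ |x| → |Real.log (q x)| ≤ K * |x|)
    (hq_inf : ∀ ε : ℝ, 0 < ε → ∃ c : ℝ, 0 < c ∧ ∀ x : ℝ, x ≠ 0 → |x| < ε → c ≤ q x)
    (hq_sq : IntegrableOn (fun x => q x ^ 2 * |x| ^ (-1 - Y)) {x : ℝ | 1 < |x|})
    -- the jump part `J` and the Brownian part `W`
    (J : ℝ → Ω → ℝ) (W : Ω → ℝ)
    (hWmeas : Measurable W) (hW : P.map W = gaussianReal 0 1)
    (hJmeas : ∀ h : ℝ, Measurable (J h))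
    (hJcf : ∀ h : ℝ, 0 < h → ∀ u : ℝ,
      ∫ ω, Complex.exp (Complex.I * u * J h ω) ∂P = Complex.exp (h * psiJ b Y Cp Cm q u))
    (hindep : ∀ h : ℝ, 0 < h → IndepFun W (J h) P)
    (hY85 : Y < 8 / 5)
    -- the threshold `ε = ε(h)`
    (ε : ℝ → ℝ) (hεpos : ∀ h : ℝ, 0 < h → 0 < ε h)
    (hε_lo : Tendsto (fun h => ε h * h ^ (-(4 : ℝ) / (8 + Y))) (𝓝[>] (0 : ℝ)) atTop)
    (hε_hi : Tendsto (fun h => ε h * h ^ (-(1 : ℝ) / (4 - Y))) (𝓝[>] (0 : ℝ)) (𝓝 0)) :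
    (fun h : ℝ =>
        variance (fun ω => Set.indicator {x : ℝ | |x| ≤ ε h} (fun x => x ^ 2)
          (σ * Real.sqrt h * W ω + J h ω)) P
        - (2 * σ ^ 4 * h ^ 2 + (Cp + Cm) / (4 - Y) * h * ε h ^ (4 - Y)))
      =o[𝓝[>] (0 : ℝ)] (fun h => h * ε h ^ (4 - Y)) := by
  have hε_zero : Tendsto ε (𝓝[>] 0) (𝓝 0) :=
    tendsto_zero_of_mul_rpow_neg (one_div_pos.2 (by linarith : 0 < 4 - Y))
      (by simpa only [neg_div] using hε_hi)
  exact variance_truncated_square_general P Y Cp Cm σ b q hY1 hY2 hCp.le hCm.le hq_meas hq_nonneg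
    hq_bdd hq_lim J W hWmeas hW hJmeas hJcf hindep ε
    (by rw [div_lt_div_iff₀] <;> linarith : 4 / (8 + Y) < 1 / 2)
    (by simpa only [neg_div] using hε_lo)
    (tendsto_nhdsWithin_iff.2 ⟨hε_zero, eventually_mem_nhdsWithin.mono hεpos⟩)

end
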